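/- Fix an integer d ≥ 3 and a real p with 1/(d-1) < p < 1, and let q ∈ [0,1) satisfy q = (1-p+pq)^{d-1}. Set θ₁ = 1 − q(1−p) − p q², η₁ = (1/2) p d (1 − q²), θ₂ = 1 − q − (d−1) p q (1−q), and η₂ = (1/2) p d (1 − q)². Then for every ε > 0 and b > 0 there exist c, C, R > 0 such that: if 𝒢 is a regular (b,d)-expander on n vertices with girth at least R, then with probability at least 1 − C·exp(−c n), the random graph G ∼ 𝒢_p satisfies | excess(C₁(G)) − (η₁−θ₁) n | ≤ 2εn and | excess(C₁^{(2)}(G)) − (η₂−θ₂) n | ≤ 2εn, where C₁(G) is a largest connected component of G and C₁^{(2)}(G) is its 2-core. -/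

import Mathlib

open scoped Classical symmDiff

noncomputable section

namespace Percolation

variable {V : Type} [Fintype V] [DecidableEq V]

/-- The edge set of `G` as a finset. -/
noncomputable def edgeFinset' (G : SimpleGraph V) : Finset (Sym2 V) :=
  Finset.univ.filter (· ∈ G.edgeSet)

/-- Probability that bond percolation on `G` with parameter `p` produces a spanning
subgraph satisfying `P`. -/
noncomputable def percProb (G : SimpleGraph V) (p : ℝ) (P : SimpleGraph V → Prop) : ℝ :=
  ∑ s ∈ (edgeFinset' G).powerset,
    (p ^ s.card * (1 - p) ^ ((edgeFinset' G).card - s.card)) *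
      (if P (SimpleGraph.fromEdgeSet (↑s)) then 1 else 0)

/-- Joint probability for two independent bond percolations on `G`. -/
noncomputable def percProb2 (G : SimpleGraph V) (p₁ p₂ : ℝ)
    (P : SimpleGraph V → SimpleGraph V → Prop) : ℝ :=
  ∑ s ∈ (edgeFinset' G).powerset, ∑ t ∈ (edgeFinset' G).powerset,
    (p₁ ^ s.card * (1 - p₁) ^ ((edgeFinset' G).card - s.card)) *
    (p₂ ^ t.card * (1 - p₂) ^ ((edgeFinset' G).card - t.card)) *
      (if P (SimpleGraph.fromEdgeSet (↑s)) (SimpleGraph.fromEdgeSet (↑t)) then 1 else 0)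

/-- Number of edges of `G` joining `S` to its complement. -/
noncomputable def cutCard (G : SimpleGraph V) (S : Finset V) : ℕ :=
  ((edgeFinset' G).filter (fun e => ∃ x ∈ S, ∃ y, y ∉ S ∧ e = s(x, y))).card

/-- `G` is a `(b,d)`-expander: max degree at most `d`, and every vertex set of size at most
`n/2` has at least `b|S|` edges to its complement. -/
def IsExpander (G : SimpleGraph V) (b : ℝ) (d : ℕ) : Prop :=
  (∀ v, (G.neighborSet v).ncard ≤ d) ∧
  ∀ S : Finset V, (S.card : ℝ) ≤ Fintype.card V / 2 → b * S.card ≤ cutCard G S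

/-- `G` is a regular `(b,d)`-expander. -/
def IsRegularExpander (G : SimpleGraph V) (b : ℝ) (d : ℕ) : Prop :=
  IsExpander G b d ∧ ∀ v, (G.neighborSet v).ncard = d

/-- The vertices of the connected component `c` of `G`. -/
noncomputable def compVerts (G : SimpleGraph V) (c : G.ConnectedComponent) : Finset V :=
  Finset.univ.filter (fun v => G.connectedComponentMk v = c)

/-- The edges of the connected component `c` of `G`. -/
noncomputable def compEdges (G : SimpleGraph V) (c : G.ConnectedComponent) : Finset (Sym2 V) :=
  (edgeFinset' G).filter (fun e => ∀ v ∈ e, G.connectedComponentMk v = c)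

/-- `c` is a largest connected component of `G`. -/
def IsLargestComp (G : SimpleGraph V) (c : G.ConnectedComponent) : Prop :=
  ∀ c' : G.ConnectedComponent, (compVerts G c').card ≤ (compVerts G c).card

/-- The 2-core of the connected component `c` of `G` : the maximal subgraph of `G`
supported inside `c` all of whose vertices have degree at least 2. -/
noncomputable def twoCoreComp (G : SimpleGraph V) (c : G.ConnectedComponent) : SimpleGraph V :=
  sSup {H : SimpleGraph V | H ≤ G ∧ (∀ v ∈ H.support, G.connectedComponentMk v = c) ∧
    ∀ v ∈ H.support, 2 ≤ (H.neighborSet v).ncard}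

/-- The event `A^R_{x,y}(H)`: the connected component of `y` in `H` with the edge `xy`
removed (if present) has at least `R` vertices. -/
def eventA (H : SimpleGraph V) (R : ℕ) (x y : V) : Prop :=
  R ≤ (compVerts (H.deleteEdges {s(x, y)})
        ((H.deleteEdges {s(x, y)}).connectedComponentMk y)).card

/-- `E₁(H)`: edges `xy` of `H` such that `A^R_{x,y}` or `A^R_{y,x}` holds. -/
noncomputable def E1set (H : SimpleGraph V) (R : ℕ) : Finset (Sym2 V) :=
  (edgeFinset' H).filter (fun e => ∃ x y, e = s(x, y) ∧ (eventA H R x y ∨ eventA H R y x))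

/-- `V₁(H)`: vertices `x` such that for some `y`, `xy ∈ E(H)` and `A^R_{x,y}` holds. -/
noncomputable def V1set (H : SimpleGraph V) (R : ℕ) : Finset V :=
  Finset.univ.filter (fun x => ∃ y, H.Adj x y ∧ eventA H R x y)

/-- `E₂(H)`: edges `xy` of `H` such that both `A^R_{x,y}` and `A^R_{y,x}` hold. -/
noncomputable def E2set (H : SimpleGraph V) (R : ℕ) : Finset (Sym2 V) :=
  (edgeFinset' H).filter (fun e => ∃ x y, e = s(x, y) ∧ eventA H R x y ∧ eventA H R y x)

/-- `V₂(H)`: vertices incident to an edge of `E₂(H)`. -/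
noncomputable def V2set (H : SimpleGraph V) (R : ℕ) : Finset V :=
  Finset.univ.filter (fun x => ∃ e ∈ E2set H R, x ∈ e)

/-- `V̄₁(H)`: vertices `y` such that `A^R_{x,y}(H)` holds for some `x`. -/
noncomputable def Vbar1 (H : SimpleGraph V) (R : ℕ) : Finset V :=
  Finset.univ.filter (fun y => ∃ x, eventA H R x y)

/-- `S` is `k`-thick in `H`: a union of pairwise disjoint subsets, each of size at least
`k`, each inducing a connected subgraph of `H`. -/
def IsThick (H : SimpleGraph V) (k : ℕ) (S : Finset V) : Prop :=
  ∃ P : Finset (Finset V),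
    (∀ T ∈ P, k ≤ T.card ∧ (H.induce (↑T : Set V)).Connected) ∧
    (↑P : Set (Finset V)).PairwiseDisjoint id ∧ S = P.biUnion id

/-- `S` is a separator of `K`. -/
def IsSeparator {W : Type} [Fintype W] (K : SimpleGraph W) (S : Finset W) : Prop :=
  ∃ A B : Finset W, Disjoint A B ∧ Disjoint A S ∧ Disjoint B S ∧
    (∀ w, w ∈ A ∨ w ∈ B ∨ w ∈ S) ∧
    (∀ a ∈ A, ∀ b ∈ B, ¬ K.Adj a b) ∧
    3 * A.card ≤ 2 * Fintype.card W ∧ 3 * B.card ≤ 2 * Fintype.card W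

set_option linter.unusedSectionVars false

section BernoulliSubset

variable {α : Type*} [DecidableEq α]

/-- The expectation of `f` over a random subset of `E` that contains each element independently
with probability `p`. -/
noncomputable def bernExp (p : ℝ) (E : Finset α) (f : Finset α → ℝ) : ℝ :=
  ∑ s ∈ E.powerset, (p ^ s.card * (1 - p) ^ (E.card - s.card)) * f s

/-- `f` depends only on the trace of its argument on `D`. -/
def DepOn {β : Type*} (f : Finset α → β) (D : Finset α) : Prop :=
  ∀ s t, s ∩ D = t ∩ D → f s = f t

@[simp] lemma bernExp_empty (p : ℝ) (f : Finset α → ℝ) : bernExp p ∅ f = f ∅ := by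
  simp [bernExp]

lemma bernExp_insert (p : ℝ) {E : Finset α} {e : α} (he : e ∉ E) (f : Finset α → ℝ) :
    bernExp p (insert e E) f =
      p * bernExp p E (fun s => f (insert e s)) + (1 - p) * bernExp p E f := by
  unfold bernExp
  rw [Finset.sum_powerset_insert he, add_comm, Finset.mul_sum, Finset.mul_sum]
  congr 1
  · refine Finset.sum_congr rfl fun s hs => ?_
    have hs' := Finset.mem_powerset.1 hs
    have : e ∉ s := fun h => he (hs' h)
    rw [Finset.card_insert_of_notMem this, Finset.card_insert_of_notMem he,
      Nat.add_sub_add_right]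
    ring
  · refine Finset.sum_congr rfl fun s hs => ?_
    have hs' := Finset.card_le_card (Finset.mem_powerset.1 hs)
    rw [Finset.card_insert_of_notMem he, Nat.sub_add_comm hs']
    ring

lemma bernExp_add (p : ℝ) (E : Finset α) (f g : Finset α → ℝ) :
    bernExp p E (fun s => f s + g s) = bernExp p E f + bernExp p E g := by
  simp [bernExp, mul_add, Finset.sum_add_distrib]

lemma bernExp_sub (p : ℝ) (E : Finset α) (f g : Finset α → ℝ) :
    bernExp p E (fun s => f s - g s) = bernExp p E f - bernExp p E g := by
  simp [bernExp, mul_sub, Finset.sum_sub_distrib]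

lemma bernExp_const_mul (p : ℝ) (E : Finset α) (c : ℝ) (f : Finset α → ℝ) :
    bernExp p E (fun s => c * f s) = c * bernExp p E f := by
  simp only [bernExp, Finset.mul_sum]
  exact Finset.sum_congr rfl fun s _ => by ring

lemma bernExp_sum {ι : Type*} (p : ℝ) (E : Finset α) (I : Finset ι) (f : ι → Finset α → ℝ) :
    bernExp p E (fun s => ∑ i ∈ I, f i s) = ∑ i ∈ I, bernExp p E (f i) := by
  simp only [bernExp, Finset.mul_sum]
  exact Finset.sum_comm

lemma bernExp_const (p : ℝ) (E : Finset α) (c : ℝ) : bernExp p E (fun _ => c) = c := by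
  induction E using Finset.induction_on with
  | empty => simp
  | insert e E he ih => rw [bernExp_insert p he, ih]; ring

lemma bernExp_congr {p : ℝ} {E : Finset α} {f g : Finset α → ℝ} (h : ∀ s ⊆ E, f s = g s) :
    bernExp p E f = bernExp p E g :=
  Finset.sum_congr rfl fun s hs => by rw [h s (Finset.mem_powerset.1 hs)]

lemma bernExp_mono {p : ℝ} (h0 : 0 ≤ p) (h1 : p ≤ 1) {E : Finset α} {f g : Finset α → ℝ}
    (h : ∀ s ⊆ E, f s ≤ g s) : bernExp p E f ≤ bernExp p E g :=
  Finset.sum_le_sum fun s hs => mul_le_mul_of_nonneg_left (h s (Finset.mem_powerset.1 hs))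
    (mul_nonneg (pow_nonneg h0 _) (pow_nonneg (by linarith) _))

lemma bernExp_nonneg {p : ℝ} (h0 : 0 ≤ p) (h1 : p ≤ 1) {E : Finset α} {f : Finset α → ℝ}
    (h : ∀ s ⊆ E, 0 ≤ f s) : 0 ≤ bernExp p E f := by
  simpa [bernExp_const] using bernExp_mono h0 h1 (f := fun _ => 0) h

lemma DepOn.insert {β : Type*} {f : Finset α → β} {D : Finset α} (h : DepOn f D) (e : α) :
    DepOn (fun s => f (insert e s)) D := by
  intro s t hst
  apply h
  by_cases he : e ∈ D
  · rw [Finset.insert_inter_of_mem he, Finset.insert_inter_of_mem he, hst]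
  · rw [Finset.insert_inter_of_notMem he, Finset.insert_inter_of_notMem he, hst]

lemma DepOn.insert_eq {β : Type*} {f : Finset α → β} {D : Finset α} (h : DepOn f D) {e : α}
    (he : e ∉ D) (s : Finset α) : f (Insert.insert e s) = f s :=
  h _ _ (Finset.insert_inter_of_notMem he)

lemma DepOn.mono {β : Type*} {f : Finset α → β} {D D' : Finset α} (h : DepOn f D) (hD : D ⊆ D') :
    DepOn f D' := by
  intro s t hst
  apply h
  have := congrArg (· ∩ D) hst
  simpa [Finset.inter_assoc, Finset.inter_eq_right.2 hD] using this

lemma depOn_mem {D : Finset α} {e : α} (he : e ∈ D) : DepOn (fun s : Finset α => e ∈ s) D := by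
  intro s t hst
  have := congrArg (e ∈ ·) hst
  simpa [he] using this

lemma depOn_ite_mem {D : Finset α} {e : α} (he : e ∈ D) :
    DepOn (fun s : Finset α => if e ∈ s then (1 : ℝ) else 0) D := fun s t hst => by
  have h : e ∈ s ↔ e ∈ t := iff_of_eq (depOn_mem he s t hst)
  simp only [h]

lemma DepOn.comp {β γ : Type*} {f : Finset α → β} {D : Finset α} (h : DepOn f D) (g : β → γ) :
    DepOn (fun s => g (f s)) D := fun s t hst => by
  simp only
  rw [h s t hst]

lemma DepOn.comp₂ {β γ δ : Type*} {f : Finset α → β} {f' : Finset α → γ} {D : Finset α}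
    (h : DepOn f D) (h' : DepOn f' D) (g : β → γ → δ) : DepOn (fun s => g (f s) (f' s)) D :=
  fun s t hst => by
    simp only
    rw [h s t hst, h' s t hst]

lemma bernExp_mul_of_depOn (p : ℝ) (E : Finset α) {f g : Finset α → ℝ} {D₁ D₂ : Finset α}
    (hf : DepOn f D₁) (hg : DepOn g D₂) (hD : Disjoint D₁ D₂) :
    bernExp p E (fun s => f s * g s) = bernExp p E f * bernExp p E g := by
  induction E using Finset.induction_on generalizing f g with
  | empty => simp
  | insert e E he ih =>
    simp only [bernExp_insert p he]
    rw [ih hf hg, ih (hf.insert e) (hg.insert e)]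
    by_cases h1 : e ∈ D₁
    · have h2 : e ∉ D₂ := Finset.disjoint_left.1 hD h1
      simp only [hg.insert_eq h2]
      ring
    · simp only [hf.insert_eq h1]
      ring

lemma depOn_prod {ι : Type*} (I : Finset ι) {f : ι → Finset α → ℝ} {D : Finset α}
    (hf : ∀ i ∈ I, DepOn (f i) D) : DepOn (fun s => ∏ i ∈ I, f i s) D :=
  fun s t hst => Finset.prod_congr rfl fun i hi => hf i hi s t hst

lemma bernExp_prod_of_depOn {ι : Type*} [DecidableEq ι] (p : ℝ) (E : Finset α) (I : Finset ι)
    {f : ι → Finset α → ℝ} {D : ι → Finset α} (hf : ∀ i ∈ I, DepOn (f i) (D i))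
    (hD : ∀ i ∈ I, ∀ j ∈ I, i ≠ j → Disjoint (D i) (D j)) :
    bernExp p E (fun s => ∏ i ∈ I, f i s) = ∏ i ∈ I, bernExp p E (f i) := by
  induction I using Finset.induction_on with
  | empty => simp [bernExp_const]
  | insert i I hi ih =>
    simp only [Finset.prod_insert hi]
    rw [bernExp_mul_of_depOn p E (D₁ := D i) (D₂ := I.biUnion D)
      (hf i (Finset.mem_insert_self _ _))
      (depOn_prod I fun j hj => (hf j (Finset.mem_insert_of_mem hj)).mono
        (Finset.subset_biUnion_of_mem D hj)), ih]
    · exact fun j hj => hf j (Finset.mem_insert_of_mem hj)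
    · exact fun j hj k hk => hD j (Finset.mem_insert_of_mem hj) k (Finset.mem_insert_of_mem hk)
    · rw [Finset.disjoint_biUnion_right]
      intro j hj
      exact hD i (Finset.mem_insert_self _ _) j (Finset.mem_insert_of_mem hj)
        (fun h => hi (h ▸ hj))

lemma bernExp_mem (p : ℝ) {E : Finset α} {e : α} (he : e ∈ E) :
    bernExp p E (fun s => if e ∈ s then 1 else 0) = p := by
  obtain ⟨F, hF, rfl⟩ : ∃ F, e ∉ F ∧ insert e F = E :=
    ⟨E.erase e, Finset.notMem_erase _ _, Finset.insert_erase he⟩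
  rw [bernExp_insert p hF]
  have : bernExp p F (fun s => if e ∈ s then (1 : ℝ) else 0) = bernExp p F (fun _ => 0) :=
    bernExp_congr fun s hs => if_neg fun h => hF (hs h)
  rw [this]
  simp [bernExp_const]

lemma bernExp_subset (p : ℝ) {E P : Finset α} (hP : P ⊆ E) :
    bernExp p E (fun s => if P ⊆ s then 1 else 0) = p ^ P.card := by
  have h1 : ∀ s : Finset α, (if P ⊆ s then (1 : ℝ) else 0) = ∏ e ∈ P, if e ∈ s then 1 else 0 := by
    intro s
    split_ifs with h
    · exact (Finset.prod_eq_one fun e he => if_pos (h he)).symm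
    · obtain ⟨e, he, hes⟩ := Finset.not_subset.1 h
      exact (Finset.prod_eq_zero he (if_neg hes)).symm
  simp only [h1]
  rw [bernExp_prod_of_depOn p E P (D := fun e => {e})
    (fun e _ => depOn_ite_mem (Finset.mem_singleton_self e))
    (fun i _ j _ hij => by simpa using hij)]
  rw [Finset.prod_congr rfl fun e he => bernExp_mem p (hP he), Finset.prod_const]

lemma bernExp_union_thinning {p p₁ p₂ : ℝ} (h : 1 - p = (1 - p₁) * (1 - p₂)) (E : Finset α)
    (f : Finset α → ℝ) :
    bernExp p E f = bernExp p₁ E (fun s => bernExp p₂ E (fun t => f (s ∪ t))) := by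
  induction E using Finset.induction_on generalizing f with
  | empty => simp
  | insert e E he ih =>
    rw [bernExp_insert p he, bernExp_insert p₁ he, ih, ih]
    simp only [bernExp_insert p₂ he, Finset.insert_union, Finset.union_insert,
      Finset.insert_idem]
    simp only [bernExp_add, bernExp_const_mul]
    have hp : p = 1 - (1 - p₁) * (1 - p₂) := by linarith
    rw [hp]
    ring

lemma exp_two_point_le {p a b x : ℝ} (h0 : 0 ≤ p) (h1 : p ≤ 1) (hx : |a - b| ≤ x) (hx1 : x ≤ 1) :
    p * Real.exp (a - (p * a + (1 - p) * b)) + (1 - p) * Real.exp (b - (p * a + (1 - p) * b))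
      ≤ Real.exp (x ^ 2) := by
  have key : ∀ y : ℝ, |y| ≤ x → Real.exp y ≤ 1 + y + x ^ 2 := by
    intro y hy
    have h2 := (abs_le.1 (Real.abs_exp_sub_one_sub_id_le (hy.trans hx1))).2
    have : y ^ 2 ≤ x ^ 2 := sq_le_sq' (by linarith [(abs_le.1 hy).1]) (abs_le.1 hy).2
    linarith
  have ha : |a - (p * a + (1 - p) * b)| ≤ x := by
    rw [show a - (p * a + (1 - p) * b) = (1 - p) * (a - b) by ring, abs_mul,
      abs_of_nonneg (by linarith)]
    nlinarith [abs_nonneg (a - b)]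
  have hb : |b - (p * a + (1 - p) * b)| ≤ x := by
    rw [show b - (p * a + (1 - p) * b) = -(p * (a - b)) by ring, abs_neg, abs_mul,
      abs_of_nonneg h0]
    nlinarith [abs_nonneg (a - b)]
  have h3 := mul_le_mul_of_nonneg_left (key _ ha) h0
  have h4 := mul_le_mul_of_nonneg_left (key _ hb) (sub_nonneg.2 h1)
  have h5 := Real.add_one_le_exp (x ^ 2)
  nlinarith

lemma bernExp_exp_le {p x : ℝ} (h0 : 0 ≤ p) (h1 : p ≤ 1) (hx1 : x ≤ 1) (E : Finset α)
    {f : Finset α → ℝ} (hf : ∀ e s, |f (insert e s) - f s| ≤ x) :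
    bernExp p E (fun s => Real.exp (f s - bernExp p E f)) ≤ Real.exp (x ^ 2 * E.card) := by
  induction E using Finset.induction_on generalizing f with
  | empty => simp
  | insert e E he ih =>
    set f₁ : Finset α → ℝ := fun s => f (insert e s) with hf₁
    have hf₁' : ∀ e' s, |f₁ (insert e' s) - f₁ s| ≤ x := by
      intro e' s
      simp only [hf₁]
      rw [Finset.insert_comm]
      exact hf _ _
    have i1 := ih hf₁'
    have i0 := ih hf
    set a := bernExp p E f₁
    set b := bernExp p E f
    have hab : |a - b| ≤ x := by
      rw [abs_le]
      have : a - b = bernExp p E (fun s => f₁ s - f s) := (bernExp_sub _ _ _ _).symm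
      rw [this]
      constructor
      · rw [← bernExp_const p E (-x)]
        exact bernExp_mono h0 h1 fun s _ => (abs_le.1 (hf e s)).1
      · rw [← bernExp_const p E x]
        exact bernExp_mono h0 h1 fun s _ => (abs_le.1 (hf e s)).2
    have hm : bernExp p (insert e E) f = p * a + (1 - p) * b := bernExp_insert p he f
    rw [hm]
    set m := p * a + (1 - p) * b
    rw [bernExp_insert p he]
    have e1 : bernExp p E (fun s => Real.exp (f (insert e s) - m)) =
        Real.exp (a - m) * bernExp p E (fun s => Real.exp (f₁ s - a)) := by
      rw [← bernExp_const_mul]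
      refine bernExp_congr fun s _ => ?_
      rw [← Real.exp_add]
      congr 1
      simp only [hf₁]
      ring
    have e0 : bernExp p E (fun s => Real.exp (f s - m)) =
        Real.exp (b - m) * bernExp p E (fun s => Real.exp (f s - b)) := by
      rw [← bernExp_const_mul]
      refine bernExp_congr fun s _ => ?_
      rw [← Real.exp_add]
      congr 1
      ring
    rw [e1, e0, Finset.card_insert_of_notMem he]
    push_cast
    rw [mul_add, mul_one, Real.exp_add]
    calc _ ≤ p * (Real.exp (a - m) * Real.exp (x ^ 2 * E.card)) +
        (1 - p) * (Real.exp (b - m) * Real.exp (x ^ 2 * E.card)) := by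
          have := sub_nonneg.2 h1
          gcongr
      _ = Real.exp (x ^ 2 * E.card) * (p * Real.exp (a - m) + (1 - p) * Real.exp (b - m)) := by
          ring
      _ ≤ _ := by
          gcongr
          exact exp_two_point_le h0 h1 hab hx1

/-- An upper-tail bound for functions with bounded differences. -/
lemma bernExp_upper_tail {p K l τ : ℝ} (h0 : 0 ≤ p) (h1 : p ≤ 1) (hl : 0 ≤ l) (hlK : l * K ≤ 1)
    (E : Finset α) {f : Finset α → ℝ} (hf : ∀ e s, |f (insert e s) - f s| ≤ K) :
    bernExp p E (fun s => if τ ≤ f s - bernExp p E f then 1 else 0) ≤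
      Real.exp ((l * K) ^ 2 * E.card - l * τ) := by
  have h2 := bernExp_exp_le h0 h1 hlK E (f := fun s => l * f s) (by
    intro e s
    rw [← mul_sub, abs_mul, abs_of_nonneg hl]
    exact mul_le_mul_of_nonneg_left (hf e s) hl)
  rw [bernExp_const_mul] at h2
  rw [Real.exp_sub, div_eq_inv_mul, ← Real.exp_neg]
  refine le_trans ?_ (mul_le_mul_of_nonneg_left h2 (Real.exp_nonneg _))
  rw [← bernExp_const_mul]
  refine bernExp_mono h0 h1 fun s _ => ?_
  rw [← Real.exp_add]
  split_ifs with h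
  · apply Real.one_le_exp
    nlinarith
  · positivity

lemma bernExp_lower_tail {p K l τ : ℝ} (h0 : 0 ≤ p) (h1 : p ≤ 1) (hl : 0 ≤ l) (hlK : l * K ≤ 1)
    (E : Finset α) {f : Finset α → ℝ} (hf : ∀ e s, |f (insert e s) - f s| ≤ K) :
    bernExp p E (fun s => if τ ≤ bernExp p E f - f s then 1 else 0) ≤
      Real.exp ((l * K) ^ 2 * E.card - l * τ) := by
  have h2 := bernExp_upper_tail (τ := τ) h0 h1 hl hlK E (f := fun s => -1 * f s) (by
    intro e s
    rw [← mul_sub, abs_mul]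
    simpa using hf e s)
  rw [bernExp_const_mul] at h2
  convert h2 using 3
  ring_nf

end BernoulliSubset

section LocalStructure

/-- The neighbours of `v` as a finset. -/
noncomputable def nbrs (G : SimpleGraph V) (v : V) : Finset V :=
  Finset.univ.filter (fun w => G.Adj v w)

/-- The vertices at distance at most `n` from `a`. -/
noncomputable def nball (G : SimpleGraph V) : ℕ → V → Finset V
  | 0, a => {a}
  | n + 1, a => nball G n a ∪ (nball G n a).biUnion (nbrs G)

/-- There is a non-backtracking walk with `k` edges in `s` that starts at `v` and whose first
step does not go to `u`. -/
def Surv (G : SimpleGraph V) (s : Finset (Sym2 V)) : ℕ → V → V → Prop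
  | 0, _, _ => True
  | k + 1, u, v => ∃ w, G.Adj v w ∧ w ≠ u ∧ s(v, w) ∈ s ∧ Surv G s k v w

/-- The edges that may be used by the walks in `Surv G s k u v`. -/
noncomputable def branch (G : SimpleGraph V) : ℕ → V → V → Finset (Sym2 V)
  | 0, _, _ => ∅
  | k + 1, u, v => ((nbrs G v).erase u).biUnion fun w => insert s(v, w) (branch G k v w)

/-- There is a non-backtracking walk with `k + 1` edges in `s` that starts at `v`. -/
def Reach (G : SimpleGraph V) (s : Finset (Sym2 V)) (k : ℕ) (v : V) : Prop :=
  ∃ w, G.Adj v w ∧ s(v, w) ∈ s ∧ Surv G s k v w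

/-- The edges that may be used by the walks in `Reach G s k v`. -/
noncomputable def rootEdges (G : SimpleGraph V) (k : ℕ) (v : V) : Finset (Sym2 V) :=
  (nbrs G v).biUnion fun w => insert s(v, w) (branch G k v w)

@[simp] lemma mem_nbrs {G : SimpleGraph V} {v w : V} : w ∈ nbrs G v ↔ G.Adj v w := by
  simp [nbrs]

@[simp] lemma mem_edgeFinset' {G : SimpleGraph V} {e : Sym2 V} :
    e ∈ edgeFinset' G ↔ e ∈ G.edgeSet := by
  simp [edgeFinset']

lemma card_nbrs (G : SimpleGraph V) (v : V) : (nbrs G v).card = (G.neighborSet v).ncard := by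
  rw [← Set.ncard_coe_finset]
  congr 1
  ext w
  simp

lemma nball_subset_succ (G : SimpleGraph V) (n : ℕ) (a : V) : nball G n a ⊆ nball G (n + 1) a :=
  Finset.subset_union_left

lemma mem_nball_self (G : SimpleGraph V) (n : ℕ) (a : V) : a ∈ nball G n a := by
  induction n with
  | zero => simp [nball]
  | succ n ih => exact nball_subset_succ G n a ih

lemma mem_nball_of_walk {G : SimpleGraph V} {a v : V} (w : G.Walk v a) {n : ℕ}
    (hw : w.length ≤ n) : v ∈ nball G n a := by
  induction w generalizing n with
  | nil => exact mem_nball_self G n _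
  | cons h w ih =>
    obtain ⟨m, rfl⟩ : ∃ m, n = m + 1 := ⟨n - 1, by simp at hw; omega⟩
    refine Finset.mem_union_right _ (Finset.mem_biUnion.2 ⟨_, ih (n := m) (by simpa using hw), ?_⟩)
    simpa using h.symm

lemma card_nball_le {G : SimpleGraph V} {d : ℕ} (hG : ∀ v, (nbrs G v).card ≤ d) (n : ℕ) (a : V) :
    (nball G n a).card ≤ (d + 1) ^ n := by
  induction n with
  | zero => simp [nball]
  | succ n ih =>
    calc _ ≤ (nball G n a).card + ((nball G n a).biUnion (nbrs G)).card :=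
          Finset.card_union_le _ _
      _ ≤ (nball G n a).card + (nball G n a).card * d := by
          gcongr
          exact Finset.card_biUnion_le_card_mul _ _ _ fun v _ => hG v
      _ = (nball G n a).card * (d + 1) := by ring
      _ ≤ _ := by
          rw [pow_succ]
          gcongr

lemma depOn_surv (G : SimpleGraph V) (k : ℕ) (u v : V) :
    DepOn (fun s => Surv G s k u v) (branch G k u v) := by
  induction k generalizing u v with
  | zero => intro s t _; rfl
  | succ k ih =>
    intro s t hst
    simp only [Surv]
    refine propext (exists_congr fun w => ?_)
    refine and_congr_right fun h1 => and_congr_right fun h2 => ?_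
    have hsub : insert s(v, w) (branch G k v w) ⊆ branch G (k + 1) u v :=
      Finset.subset_biUnion_of_mem (fun w => insert s(v, w) (branch G k v w))
        (Finset.mem_erase.2 ⟨h2, mem_nbrs.2 h1⟩)
    refine and_congr (iff_of_eq (depOn_mem (hsub (Finset.mem_insert_self _ _)) s t hst))
      (iff_of_eq (((ih v w).mono ((Finset.subset_insert _ _).trans hsub)) s t hst))

lemma depOn_reach (G : SimpleGraph V) (k : ℕ) (v : V) :
    DepOn (fun s => Reach G s k v) (rootEdges G k v) := by
  intro s t hst
  refine propext (exists_congr fun w => and_congr_right fun h1 => ?_)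
  have hsub : insert s(v, w) (branch G k v w) ⊆ rootEdges G k v :=
    Finset.subset_biUnion_of_mem (fun w => insert s(v, w) (branch G k v w)) (mem_nbrs.2 h1)
  exact and_congr (iff_of_eq (depOn_mem (hsub (Finset.mem_insert_self _ _)) s t hst))
    (iff_of_eq (((depOn_surv G k v w).mono ((Finset.subset_insert _ _).trans hsub)) s t hst))

lemma Surv.mono {G : SimpleGraph V} {s t : Finset (Sym2 V)} (hst : s ⊆ t) {k : ℕ} {u v : V}
    (h : Surv G s k u v) : Surv G t k u v := by
  induction k generalizing u v with
  | zero => trivial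
  | succ k ih =>
    obtain ⟨w, h1, h2, h3, h4⟩ := h
    exact ⟨w, h1, h2, hst h3, ih h4⟩

lemma Reach.mono {G : SimpleGraph V} {s t : Finset (Sym2 V)} (hst : s ⊆ t) {k : ℕ} {v : V}
    (h : Reach G s k v) : Reach G t k v := by
  obtain ⟨w, h1, h2, h3⟩ := h
  exact ⟨w, h1, hst h2, h3.mono hst⟩

lemma exists_walk_of_mem_branch {G : SimpleGraph V} {k : ℕ} {v w : V} (h : G.Adj v w)
    {e : Sym2 V} (he : e ∈ insert s(v, w) (branch G k v w)) :
    ∃ (x : V) (P : G.Walk w x), List.IsChain (· ≠ ·) (SimpleGraph.Walk.cons h P).edges ∧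
      P.length ≤ k ∧ e ∈ (SimpleGraph.Walk.cons h P).edges := by
  induction k generalizing v w with
  | zero =>
    refine ⟨w, .nil, ?_, ?_, ?_⟩
    · simp
    · simp
    · simpa [branch] using he
  | succ k ih =>
    rcases Finset.mem_insert.1 he with rfl | he
    · exact ⟨w, .nil, by simp, by simp, by simp⟩
    · simp only [branch, Finset.mem_biUnion] at he
      obtain ⟨w', hw', he'⟩ := he
      obtain ⟨hne, hadj⟩ := Finset.mem_erase.1 hw'
      obtain ⟨x, P, hc, hl, hP⟩ := ih (mem_nbrs.1 hadj) he'
      refine ⟨x, .cons (mem_nbrs.1 hadj) P, ?_, by simpa using hl, ?_⟩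
      · rw [SimpleGraph.Walk.edges_cons, SimpleGraph.Walk.edges_cons, List.isChain_cons_cons]
        refine ⟨?_, by simpa using hc⟩
        simp only [ne_eq, Sym2.eq_iff, not_or, not_and]
        exact ⟨fun h1 h2 => hne (h1 ▸ h2 ▸ rfl), fun h1 => absurd h1.symm hne⟩
      · rw [SimpleGraph.Walk.edges_cons]
        exact List.mem_cons_of_mem _ hP

/-- In a graph without short cycles, a short non-backtracking walk is a path. -/
lemma isPath_of_isChain {G : SimpleGraph V} {g : ℕ}
    (hg : ∀ (a : V) (c : G.Walk a a), c.IsCycle → g ≤ c.length) {a b : V} (w : G.Walk a b)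
    (hw : List.IsChain (· ≠ ·) w.edges) (hl : w.length < g) : w.IsPath := by
  let K : SimpleGraph V := SimpleGraph.fromEdgeSet {e | e ∈ w.edges}
  have hK : ∀ e ∈ w.edges, e ∈ K.edgeSet := by
    intro e he
    simp only [K, SimpleGraph.edgeSet_fromEdgeSet]
    exact ⟨he, G.not_isDiag_of_mem_edgeSet (w.edges_subset_edgeSet he)⟩
  have hKe : ∀ e ∈ K.edgeSet, e ∈ w.edges := by
    intro e he
    simp only [K, SimpleGraph.edgeSet_fromEdgeSet] at he
    exact he.1
  have hac : K.IsAcyclic := by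
    intro x c hc
    have hKG : K ≤ G := by
      rw [← SimpleGraph.edgeSet_subset_edgeSet]
      exact fun e he => w.edges_subset_edgeSet (hKe e he)
    have h1 := hg x (c.mapLe hKG) (hc.mapLe hKG)
    rw [SimpleGraph.Walk.length_mapLe] at h1
    have h2 : c.edges.length ≤ w.edges.length :=
      (List.subperm_of_subset hc.edges_nodup
        fun e he => hKe e (c.edges_subset_edgeSet he)).length_le
    simp only [SimpleGraph.Walk.length_edges] at h2
    omega
  have h3 := (hac.isPath_iff_isChain (w.transfer K hK)).2 (by simpa using hw)
  rw [SimpleGraph.Walk.isPath_def, SimpleGraph.Walk.support_transfer] at h3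
  exact (SimpleGraph.Walk.isPath_def _).2 h3

lemma notMem_branch {G : SimpleGraph V} {g : ℕ}
    (hg : ∀ (a : V) (c : G.Walk a a), c.IsCycle → g ≤ c.length) {k : ℕ} (hk : k + 1 < g)
    {v w : V} (h : G.Adj v w) : s(v, w) ∉ branch G k v w := by
  intro he
  cases k with
  | zero => simp [branch] at he
  | succ k =>
    simp only [branch, Finset.mem_biUnion] at he
    obtain ⟨w', hw', he'⟩ := he
    obtain ⟨hne, hadj⟩ := Finset.mem_erase.1 hw'
    obtain ⟨x, P, hc, hl, hP⟩ := exists_walk_of_mem_branch (mem_nbrs.1 hadj) he'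
    have hpath : (SimpleGraph.Walk.cons h (.cons (mem_nbrs.1 hadj) P)).IsPath := by
      refine isPath_of_isChain hg _ ?_ (by simp; omega)
      rw [SimpleGraph.Walk.edges_cons, SimpleGraph.Walk.edges_cons, List.isChain_cons_cons]
      refine ⟨?_, by simpa using hc⟩
      simp only [ne_eq, Sym2.eq_iff, not_or, not_and]
      exact ⟨fun h1 h2 => hne (h1 ▸ h2 ▸ rfl), fun h1 => absurd h1.symm hne⟩
    have := hpath.isTrail.edges_nodup
    rw [SimpleGraph.Walk.edges_cons, List.nodup_cons] at this
    exact this.1 hP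

lemma disjoint_branch {G : SimpleGraph V} {g : ℕ}
    (hg : ∀ (a : V) (c : G.Walk a a), c.IsCycle → g ≤ c.length) {k : ℕ} (hk : 2 * (k + 1) < g)
    {v w w' : V} (h : G.Adj v w) (h' : G.Adj v w') (hww : w ≠ w') :
    Disjoint (insert s(v, w) (branch G k v w)) (insert s(v, w') (branch G k v w')) := by
  rw [Finset.disjoint_left]
  intro e he he'
  obtain ⟨x, P, hc, hl, hP⟩ := exists_walk_of_mem_branch h he
  obtain ⟨x', P', hc', hl', hP'⟩ := exists_walk_of_mem_branch h' he'
  have hpath : ((SimpleGraph.Walk.cons h P).reverse.append (.cons h' P')).IsPath := by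
    refine isPath_of_isChain hg _ ?_ (by simp; omega)
    rw [SimpleGraph.Walk.edges_append, SimpleGraph.Walk.edges_reverse, List.isChain_append]
    refine ⟨?_, hc', ?_⟩
    · rw [List.isChain_reverse]
      exact hc.imp fun a b hab => hab.symm
    · rw [List.getLast?_reverse]
      intro a ha b hb
      simp only [SimpleGraph.Walk.edges_cons, List.head?_cons, Option.mem_def,
        Option.some.injEq] at ha hb
      subst ha hb
      simp only [ne_eq, Sym2.eq_iff, not_or, not_and]
      exact ⟨fun _ => hww, fun h1 h2 => hww (h2.trans h1)⟩
  have hnd := hpath.isTrail.edges_nodup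
  rw [SimpleGraph.Walk.edges_append, SimpleGraph.Walk.edges_reverse] at hnd
  exact List.disjoint_of_nodup_append hnd (List.mem_reverse.2 hP) hP'

lemma mem_nball_of_mem_rootEdges {G : SimpleGraph V} {k : ℕ} {v : V} {e : Sym2 V}
    (he : e ∈ rootEdges G k v) {a : V} (ha : a ∈ e) : v ∈ nball G (k + 1) a := by
  simp only [rootEdges, Finset.mem_biUnion, mem_nbrs] at he
  obtain ⟨w, hw, he⟩ := he
  obtain ⟨x, P, -, hl, hP⟩ := exists_walk_of_mem_branch hw he
  have hs : a ∈ (SimpleGraph.Walk.cons hw P).support := by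
    obtain ⟨b, rfl⟩ := ha
    exact SimpleGraph.Walk.fst_mem_support_of_mem_edges _ hP
  refine mem_nball_of_walk ((SimpleGraph.Walk.cons hw P).takeUntil a hs) ?_
  refine (SimpleGraph.Walk.length_takeUntil_le_length _ hs).trans ?_
  simpa using hl

end LocalStructure

section ComponentSize

lemma surv_of_isPath {G : SimpleGraph V} {s : Finset (Sym2 V)} (hs : s ⊆ edgeFinset' G)
    {v x : V} (P : (SimpleGraph.fromEdgeSet (s : Set (Sym2 V))).Walk v x) (hP : P.IsPath)
    {u : V} (hu : u ∉ P.support) {k : ℕ} (hk : k ≤ P.length) : Surv G s k u v := by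
  induction P generalizing u k with
  | nil =>
    obtain rfl : k = 0 := by simpa using hk
    trivial
  | @cons v w x h P ih =>
    cases k with
    | zero => trivial
    | succ k =>
      have hvw := (SimpleGraph.fromEdgeSet_adj _).1 h
      rw [SimpleGraph.Walk.cons_isPath_iff] at hP
      have hmem : s(v, w) ∈ s := by simpa using hvw.1
      refine ⟨w, by simpa using hs hmem, ?_, hmem, ih hP.1 hP.2 (by simpa using hk)⟩
      rintro rfl
      exact hu (by simp)

lemma compVerts_subset_nball {G : SimpleGraph V} {s : Finset (Sym2 V)} (hs : s ⊆ edgeFinset' G)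
    {k : ℕ} {v : V} (hr : ¬ Reach G s k v) :
    compVerts (SimpleGraph.fromEdgeSet (s : Set (Sym2 V)))
      ((SimpleGraph.fromEdgeSet (s : Set (Sym2 V))).connectedComponentMk v) ⊆ nball G k v := by
  intro x hx
  simp only [compVerts, Finset.mem_filter, Finset.mem_univ, true_and] at hx
  by_contra hxb
  obtain ⟨P, hP⟩ := (SimpleGraph.ConnectedComponent.exact hx).symm.exists_isPath
  have hle : SimpleGraph.fromEdgeSet (s : Set (Sym2 V)) ≤ G := by
    intro a b hab
    have := (SimpleGraph.fromEdgeSet_adj _).1 hab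
    exact mem_edgeFinset'.1 (hs (Finset.mem_coe.1 this.1))
  have hlen : k < P.length := by
    by_contra hlen
    exact hxb (mem_nball_of_walk (P.mapLe hle).reverse (by simpa using hlen))
  cases P with
  | nil => simp at hlen
  | @cons _ w _ h P =>
    have hvw := (SimpleGraph.fromEdgeSet_adj _).1 h
    rw [SimpleGraph.Walk.cons_isPath_iff] at hP
    exact hr ⟨w, hle h, by simpa using hvw.1,
      surv_of_isPath hs P hP.1 hP.2 (by simpa [Nat.lt_succ_iff] using hlen)⟩

lemma exists_walk_of_surv {G : SimpleGraph V} {s : Finset (Sym2 V)} {k : ℕ} {u v : V}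
    (h : G.Adj u v) (hs : Surv G s k u v) :
    ∃ (x : V) (P : G.Walk v x), List.IsChain (· ≠ ·) (SimpleGraph.Walk.cons h P).edges ∧
      P.length = k ∧ ∀ e ∈ P.edges, e ∈ s := by
  induction k generalizing u v with
  | zero => exact ⟨v, .nil, by simp, by simp, by simp⟩
  | succ k ih =>
    obtain ⟨w, hadj, hne, hmem, hs⟩ := hs
    obtain ⟨x, P, hc, hl, hP⟩ := ih hadj hs
    refine ⟨x, .cons hadj P, ?_, by simpa using hl, ?_⟩
    · rw [SimpleGraph.Walk.edges_cons, SimpleGraph.Walk.edges_cons, List.isChain_cons_cons]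
      refine ⟨?_, by simpa using hc⟩
      simp only [ne_eq, Sym2.eq_iff, not_or, not_and]
      exact ⟨fun h1 h2 => hne (h1 ▸ h2 ▸ rfl), fun h1 => absurd h1.symm hne⟩
    · intro e he
      rw [SimpleGraph.Walk.edges_cons, List.mem_cons] at he
      rcases he with rfl | he
      exacts [hmem, hP e he]

lemma le_card_compVerts_of_reach {G : SimpleGraph V} {g : ℕ}
    (hg : ∀ (a : V) (c : G.Walk a a), c.IsCycle → g ≤ c.length) {s : Finset (Sym2 V)} {k : ℕ}
    (hk : k + 1 < g) {v : V} (hr : Reach G s k v) :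
    k + 2 ≤ (compVerts (SimpleGraph.fromEdgeSet (s : Set (Sym2 V)))
      ((SimpleGraph.fromEdgeSet (s : Set (Sym2 V))).connectedComponentMk v)).card := by
  obtain ⟨w, hadj, hmem, hs⟩ := hr
  obtain ⟨x, P, hc, hl, hP⟩ := exists_walk_of_surv hadj hs
  set Q := SimpleGraph.Walk.cons hadj P with hQ
  have hpath : Q.IsPath := isPath_of_isChain hg Q hc (by simp [hQ, hl]; omega)
  have hcard : Q.support.toFinset.card = k + 2 := by
    rw [List.toFinset_card_of_nodup hpath.support_nodup, SimpleGraph.Walk.length_support]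
    simp [hQ, hl]
  rw [← hcard]
  refine Finset.card_le_card fun y hy => ?_
  simp only [compVerts, Finset.mem_filter, Finset.mem_univ, true_and]
  have hT : ∀ e ∈ Q.edges, e ∈ (SimpleGraph.fromEdgeSet (s : Set (Sym2 V))).edgeSet := by
    intro e he
    rw [SimpleGraph.edgeSet_fromEdgeSet]
    refine ⟨?_, G.not_isDiag_of_mem_edgeSet (Q.edges_subset_edgeSet he)⟩
    rw [hQ, SimpleGraph.Walk.edges_cons, List.mem_cons] at he
    rcases he with rfl | he
    exacts [by simpa using hmem, by simpa using hP e he]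
  have hy' : y ∈ (Q.transfer _ hT).support := by
    rw [SimpleGraph.Walk.support_transfer]
    exact List.mem_toFinset.1 hy
  exact SimpleGraph.ConnectedComponent.sound ((Q.transfer _ hT).takeUntil y hy').reachable.symm

end ComponentSize

section LocalExpectation

/-- The probability that a branch of the percolated `d`-regular tree dies before `k` steps. -/
noncomputable def dieProb (p : ℝ) (d : ℕ) : ℕ → ℝ
  | 0 => 0
  | k + 1 => (1 - p + p * dieProb p d k) ^ (d - 1)

/-- Indicator of the failure of `Surv`. -/
noncomputable def dieInd (G : SimpleGraph V) (k : ℕ) (u v : V) (s : Finset (Sym2 V)) : ℝ :=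
  if Surv G s k u v then 0 else 1

/-- Indicator that the edge `e` is present. -/
noncomputable def edgeInd (e : Sym2 V) (s : Finset (Sym2 V)) : ℝ := if e ∈ s then 1 else 0

/-- Indicator of `Reach`. -/
noncomputable def reachInd (G : SimpleGraph V) (k : ℕ) (v : V) (s : Finset (Sym2 V)) : ℝ :=
  if Reach G s k v then 1 else 0

/-- Indicator that `vw` is absent or that the branch behind it dies before `k` steps. -/
noncomputable def blockInd (G : SimpleGraph V) (k : ℕ) (v w : V) (s : Finset (Sym2 V)) : ℝ :=
  1 - edgeInd s(v, w) s + edgeInd s(v, w) s * dieInd G k v w s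

lemma blockInd_eq (G : SimpleGraph V) (k : ℕ) (v w : V) (s : Finset (Sym2 V)) :
    blockInd G k v w s = if s(v, w) ∈ s ∧ Surv G s k v w then 0 else 1 := by
  unfold blockInd edgeInd dieInd
  by_cases h1 : s(v, w) ∈ s <;> by_cases h2 : Surv G s k v w <;> simp [h1, h2]

lemma dieInd_succ (G : SimpleGraph V) (k : ℕ) (u v : V) (s : Finset (Sym2 V)) :
    dieInd G (k + 1) u v s = ∏ w ∈ (nbrs G v).erase u, blockInd G k v w s := by
  unfold dieInd
  simp only [blockInd_eq]
  split_ifs with h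
  · obtain ⟨w, h1, h2, h3, h4⟩ := h
    exact (Finset.prod_eq_zero (Finset.mem_erase.2 ⟨h2, mem_nbrs.2 h1⟩)
      (by rw [if_pos (And.intro h3 h4)])).symm
  · refine (Finset.prod_eq_one fun w hw => if_neg fun hc => h ?_).symm
    obtain ⟨h1, h2⟩ := Finset.mem_erase.1 hw
    exact ⟨w, mem_nbrs.1 h2, h1, hc.1, hc.2⟩

lemma one_sub_reachInd (G : SimpleGraph V) (k : ℕ) (v : V) (s : Finset (Sym2 V)) :
    1 - reachInd G k v s = ∏ w ∈ nbrs G v, blockInd G k v w s := by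
  unfold reachInd
  simp only [blockInd_eq]
  split_ifs with h
  · obtain ⟨w, h1, h3, h4⟩ := h
    rw [Finset.prod_eq_zero (mem_nbrs.2 h1) (by rw [if_pos (And.intro h3 h4)]), sub_self]
  · rw [Finset.prod_eq_one fun w hw => if_neg fun hc => h ⟨w, mem_nbrs.1 hw, hc.1, hc.2⟩, sub_zero]

lemma depOn_edgeInd {D : Finset (Sym2 V)} {e : Sym2 V} (he : e ∈ D) : DepOn (edgeInd e) D :=
  depOn_ite_mem he

lemma depOn_dieInd (G : SimpleGraph V) (k : ℕ) (v w : V) :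
    DepOn (dieInd G k v w) (branch G k v w) :=
  (depOn_surv G k v w).comp fun b : Prop => if b then (0 : ℝ) else 1

lemma depOn_edgeInd_mul_dieInd (G : SimpleGraph V) (k : ℕ) (v w : V) :
    DepOn (fun s => edgeInd s(v, w) s * dieInd G k v w s) (insert s(v, w) (branch G k v w)) :=
  (depOn_edgeInd (Finset.mem_insert_self _ _)).comp₂
    ((depOn_dieInd G k v w).mono (Finset.subset_insert _ _)) fun a b => a * b

lemma depOn_blockInd (G : SimpleGraph V) (k : ℕ) (v w : V) :
    DepOn (blockInd G k v w) (insert s(v, w) (branch G k v w)) :=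
  (depOn_edgeInd (Finset.mem_insert_self _ _)).comp₂
    ((depOn_dieInd G k v w).mono (Finset.subset_insert _ _)) fun a b => 1 - a + a * b

lemma bernExp_edgeInd_mul_dieInd {G : SimpleGraph V} {g : ℕ}
    (hg : ∀ (a : V) (c : G.Walk a a), c.IsCycle → g ≤ c.length) (p : ℝ) {k : ℕ} (hk : k + 1 < g)
    {v w : V} (h : G.Adj v w) :
    bernExp p (edgeFinset' G) (fun s => edgeInd s(v, w) s * dieInd G k v w s) =
      p * bernExp p (edgeFinset' G) (dieInd G k v w) := by
  rw [bernExp_mul_of_depOn p _ (depOn_edgeInd (Finset.mem_singleton_self _))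
    (depOn_dieInd G k v w) (Finset.disjoint_singleton_left.2 (notMem_branch hg hk h))]
  congr 1
  exact bernExp_mem p (by simpa using h)

lemma bernExp_blockInd {G : SimpleGraph V} {g : ℕ}
    (hg : ∀ (a : V) (c : G.Walk a a), c.IsCycle → g ≤ c.length) (p : ℝ) {k : ℕ} (hk : k + 1 < g)
    {v w : V} (h : G.Adj v w) :
    bernExp p (edgeFinset' G) (blockInd G k v w) =
      1 - p + p * bernExp p (edgeFinset' G) (dieInd G k v w) := by
  have : bernExp p (edgeFinset' G) (blockInd G k v w) = bernExp p (edgeFinset' G)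
      (fun s => (1 - edgeInd s(v, w) s) + edgeInd s(v, w) s * dieInd G k v w s) := rfl
  rw [this, bernExp_add, bernExp_sub, bernExp_const, bernExp_edgeInd_mul_dieInd hg p hk h]
  congr 2
  exact bernExp_mem p (by simpa using h)

lemma bernExp_dieInd {G : SimpleGraph V} {d g : ℕ} (hG : ∀ v, (nbrs G v).card = d)
    (hg : ∀ (a : V) (c : G.Walk a a), c.IsCycle → g ≤ c.length) (p : ℝ) {k : ℕ}
    (hk : 2 * k < g) {u v : V} (h : G.Adj u v) :
    bernExp p (edgeFinset' G) (dieInd G k u v) = dieProb p d k := by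
  induction k generalizing u v with
  | zero =>
    have : dieInd G 0 u v = fun _ => 0 := by
      funext s
      simp [dieInd, Surv]
    rw [this, bernExp_const]
    rfl
  | succ k ih =>
    have h1 : dieInd G (k + 1) u v = fun s => ∏ w ∈ (nbrs G v).erase u, blockInd G k v w s :=
      funext fun s => dieInd_succ G k u v s
    rw [h1, bernExp_prod_of_depOn p _ _ (D := fun w => insert s(v, w) (branch G k v w))
      (fun w _ => depOn_blockInd G k v w)]
    · rw [Finset.prod_congr rfl (g := fun _ => 1 - p + p * dieProb p d k), Finset.prod_const,
        Finset.card_erase_of_mem (mem_nbrs.2 h.symm), hG]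
      · rfl
      · intro w hw
        have hadj := mem_nbrs.1 (Finset.mem_erase.1 hw).2
        rw [bernExp_blockInd hg p (by omega) hadj, ih (by omega) hadj]
    · intro w hw w' hw' hne
      exact disjoint_branch hg hk (mem_nbrs.1 (Finset.mem_erase.1 hw).2)
        (mem_nbrs.1 (Finset.mem_erase.1 hw').2) hne

lemma bernExp_reachInd {G : SimpleGraph V} {d g : ℕ} (hG : ∀ v, (nbrs G v).card = d)
    (hg : ∀ (a : V) (c : G.Walk a a), c.IsCycle → g ≤ c.length) (p : ℝ) {k : ℕ}
    (hk : 2 * (k + 1) < g) (v : V) :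
    bernExp p (edgeFinset' G) (reachInd G k v) = 1 - (1 - p + p * dieProb p d k) ^ d := by
  have h1 : reachInd G k v = fun s => 1 - ∏ w ∈ nbrs G v, blockInd G k v w s :=
    funext fun s => by rw [← one_sub_reachInd]; ring
  rw [h1, bernExp_sub, bernExp_const,
    bernExp_prod_of_depOn p _ _ (D := fun w => insert s(v, w) (branch G k v w))
      (fun w _ => depOn_blockInd G k v w)]
  · rw [Finset.prod_congr rfl (g := fun _ => 1 - p + p * dieProb p d k), Finset.prod_const, hG]
    intro w hw
    have hadj := mem_nbrs.1 hw
    rw [bernExp_blockInd hg p (by omega) hadj, bernExp_dieInd hG hg p (by omega) hadj]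
  · exact fun w hw w' hw' hne => disjoint_branch hg hk (mem_nbrs.1 hw) (mem_nbrs.1 hw') hne

lemma bernExp_edgeInd_mul_reachInd {G : SimpleGraph V} {d g : ℕ} (hG : ∀ v, (nbrs G v).card = d)
    (hg : ∀ (a : V) (c : G.Walk a a), c.IsCycle → g ≤ c.length) (p : ℝ) {k : ℕ}
    (hk : 2 * (k + 1) < g) {v w : V} (h : G.Adj v w) :
    bernExp p (edgeFinset' G) (fun s => edgeInd s(v, w) s * reachInd G k v s) =
      p - p * dieProb p d k * (1 - p + p * dieProb p d k) ^ (d - 1) := by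
  have h1 : ∀ s, edgeInd s(v, w) s * reachInd G k v s = edgeInd s(v, w) s -
      (edgeInd s(v, w) s * dieInd G k v w s) *
        ∏ w' ∈ (nbrs G v).erase w, blockInd G k v w' s := by
    intro s
    have h2 := one_sub_reachInd G k v s
    rw [← Finset.mul_prod_erase _ _ (mem_nbrs.2 h)] at h2
    rw [show reachInd G k v s = 1 - (1 - reachInd G k v s) by ring, h2]
    have h3 : edgeInd s(v, w) s * blockInd G k v w s =
        edgeInd s(v, w) s * dieInd G k v w s := by
      unfold blockInd edgeInd
      split_ifs <;> ring
    rw [← h3]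
    ring
  simp only [h1]
  rw [bernExp_sub]
  congr 1
  · exact bernExp_mem p (by simpa using h)
  rw [bernExp_mul_of_depOn p _ (depOn_edgeInd_mul_dieInd G k v w)
    (D₂ := ((nbrs G v).erase w).biUnion fun w' => insert s(v, w') (branch G k v w'))
    (depOn_prod _ fun w' hw' => (depOn_blockInd G k v w').mono
      (Finset.subset_biUnion_of_mem (fun w' => insert s(v, w') (branch G k v w')) hw')),
    bernExp_edgeInd_mul_dieInd hg p (by omega) h, bernExp_dieInd hG hg p (by omega) h,
    bernExp_prod_of_depOn p _ _ (D := fun w => insert s(v, w) (branch G k v w))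
      (fun w _ => depOn_blockInd G k v w)]
  · rw [Finset.prod_congr rfl (g := fun _ => 1 - p + p * dieProb p d k), Finset.prod_const,
      Finset.card_erase_of_mem (mem_nbrs.2 h), hG]
    intro w' hw'
    have hadj := mem_nbrs.1 (Finset.mem_erase.1 hw').2
    rw [bernExp_blockInd hg p (by omega) hadj, bernExp_dieInd hG hg p (by omega) hadj]
  · exact fun w₁ h₁ w₂ h₂ hne => disjoint_branch hg hk (mem_nbrs.1 (Finset.mem_erase.1 h₁).2)
      (mem_nbrs.1 (Finset.mem_erase.1 h₂).2) hne
  · rw [Finset.disjoint_biUnion_right]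
    intro w' hw'
    exact disjoint_branch hg hk h (mem_nbrs.1 (Finset.mem_erase.1 hw').2)
      (Finset.mem_erase.1 hw').1.symm

end LocalExpectation

section FixedPoint

lemma pow_lt_of_fixed_lt {m : ℕ} (hm : 2 ≤ m) {p q x : ℝ} (hp : 0 < p) (hp1 : p < 1)
    (hq0 : 0 ≤ q) (hq : q = (1 - p + p * q) ^ m) (hqx : q < x) (hx : x < 1) :
    (1 - p + p * x) ^ m < x := by
  have h1q : 0 < 1 - q := by linarith
  set t := (x - q) / (1 - q) with ht
  have htq : t * (1 - q) = x - q := div_mul_cancel₀ _ h1q.ne'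
  have ht0 : 0 < t := div_pos (by linarith) h1q
  have ht1 : t < 1 := (div_lt_one h1q).2 (by linarith)
  have h0 : 0 ≤ 1 - p + p * q := by nlinarith
  have h := (strictConvexOn_pow hm).2 (x := 1 - p + p * q) (y := 1) h0
    (by simp) (by nlinarith) (sub_pos.2 ht1) ht0 (by ring)
  simp only [smul_eq_mul, one_pow, mul_one] at h
  rw [← hq] at h
  have e1 : (1 - t) * (1 - p + p * q) + t = 1 - p + p * x := by
    have : x = q + t * (1 - q) := by linarith
    rw [this]
    ring
  have e2 : (1 - t) * q + t = x := by linarith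
  rwa [e1, e2] at h

lemma dieProb_mem {p x : ℝ} {d : ℕ} (hp : 0 ≤ p) (hp1 : p ≤ 1) (hx0 : 0 ≤ x)
    (hx : (1 - p + p * x) ^ (d - 1) ≤ x) (k : ℕ) : 0 ≤ dieProb p d k ∧ dieProb p d k ≤ x := by
  induction k with
  | zero => exact ⟨le_rfl, hx0⟩
  | succ k ih =>
    have h0 : 0 ≤ 1 - p + p * dieProb p d k := by nlinarith [ih.1]
    refine ⟨pow_nonneg h0 _, le_trans ?_ hx⟩
    exact pow_le_pow_left₀ h0 (by nlinarith [ih.2]) _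

lemma tendsto_dieProb {p q : ℝ} {d : ℕ} (hd : 3 ≤ d) (hp : 0 < p) (hp1 : p < 1)
    (hq0 : 0 ≤ q) (hq1 : q < 1) (hq : q = (1 - p + p * q) ^ (d - 1)) :
    Filter.Tendsto (dieProb p d) Filter.atTop (nhds q) := by
  have hb := dieProb_mem hp.le hp1.le hq0 hq.symm.le
  have hmono : Monotone (dieProb p d) := by
    refine monotone_nat_of_le_succ fun k => ?_
    induction k with
    | zero => exact (hb 1).1
    | succ k ih =>
      have h0 : 0 ≤ 1 - p + p * dieProb p d k := by nlinarith [(hb k).1]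
      exact pow_le_pow_left₀ h0 (by nlinarith) _
  have hlim := tendsto_atTop_ciSup hmono ⟨q, by rintro _ ⟨k, rfl⟩; exact (hb k).2⟩
  set l := ⨆ i, dieProb p d i
  have hl0 : 0 ≤ l := ge_of_tendsto' hlim fun k => (hb k).1
  have hlq : l ≤ q := le_of_tendsto' hlim fun k => (hb k).2
  have hfix : l = (1 - p + p * l) ^ (d - 1) := by
    have h1 : Filter.Tendsto (fun k => dieProb p d (k + 1)) Filter.atTop (nhds l) :=
      hlim.comp (Filter.tendsto_add_atTop_nat 1)
    have h2 : Filter.Tendsto (fun k => (1 - p + p * dieProb p d k) ^ (d - 1)) Filter.atTop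
        (nhds ((1 - p + p * l) ^ (d - 1))) := ((hlim.const_mul p).const_add (1 - p)).pow (d - 1)
    exact tendsto_nhds_unique h1 h2
  rcases hlq.eq_or_lt with h | h
  · rwa [← h]
  · exact absurd (pow_lt_of_fixed_lt (by omega) hp hp1 hl0 hfix h hq1) (by rw [← hq]; exact lt_irrefl q)

end FixedPoint

section Concentration

/-- A local approximation of the excess of the giant component. -/
noncomputable def localExcess (G : SimpleGraph V) (k : ℕ) (s : Finset (Sym2 V)) : ℝ :=
  ∑ v, (1 / 2 * ∑ w ∈ nbrs G v, edgeInd s(v, w) s - 1) * reachInd G k v s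

/-- The number of vertices at which a long non-backtracking walk starts. -/
noncomputable def reachCount (G : SimpleGraph V) (k : ℕ) (s : Finset (Sym2 V)) : ℝ :=
  ∑ v, reachInd G k v s

lemma bernExp_reachCount {G : SimpleGraph V} {d g : ℕ} (hG : ∀ v, (nbrs G v).card = d)
    (hg : ∀ (a : V) (c : G.Walk a a), c.IsCycle → g ≤ c.length) (p : ℝ) {k : ℕ}
    (hk : 2 * (k + 1) < g) :
    bernExp p (edgeFinset' G) (reachCount G k) =
      (1 - (1 - p + p * dieProb p d k) ^ d) * Fintype.card V := by
  unfold reachCount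
  rw [bernExp_sum, Finset.sum_congr rfl fun v _ => bernExp_reachInd hG hg p hk v]
  rw [Finset.sum_const, nsmul_eq_mul, Finset.card_univ, mul_comm]

lemma bernExp_localExcess {G : SimpleGraph V} {d g : ℕ} (hG : ∀ v, (nbrs G v).card = d)
    (hg : ∀ (a : V) (c : G.Walk a a), c.IsCycle → g ≤ c.length) (p : ℝ) {k : ℕ}
    (hk : 2 * (k + 1) < g) :
    bernExp p (edgeFinset' G) (localExcess G k) =
      (1 / 2 * d * (p - p * dieProb p d k * (1 - p + p * dieProb p d k) ^ (d - 1))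
        - (1 - (1 - p + p * dieProb p d k) ^ d)) * Fintype.card V := by
  have h1 : ∀ s, localExcess G k s =
      ∑ v, (1 / 2 * (∑ w ∈ nbrs G v, edgeInd s(v, w) s * reachInd G k v s)
        - reachInd G k v s) := by
    intro s
    unfold localExcess
    refine Finset.sum_congr rfl fun v _ => ?_
    rw [← Finset.sum_mul]
    ring
  rw [bernExp_congr fun s _ => h1 s, bernExp_sum, Finset.sum_congr rfl (g := fun _ =>
      (1 / 2 * d * (p - p * dieProb p d k * (1 - p + p * dieProb p d k) ^ (d - 1))
        - (1 - (1 - p + p * dieProb p d k) ^ d)))]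
  · rw [Finset.sum_const, nsmul_eq_mul, Finset.card_univ, mul_comm]
  · intro v _
    rw [bernExp_sub, bernExp_const_mul, bernExp_sum, bernExp_reachInd hG hg p hk v,
      Finset.sum_congr rfl fun w hw => bernExp_edgeInd_mul_reachInd hG hg p hk (mem_nbrs.1 hw),
      Finset.sum_const, hG, nsmul_eq_mul]
    ring

lemma abs_sum_insert_sub_le {G : SimpleGraph V} {d k : ℕ} (hG : ∀ v, (nbrs G v).card ≤ d)
    {f : V → Finset (Sym2 V) → ℝ} {B : ℝ} (hB : 0 ≤ B) (hf : ∀ v, DepOn (f v) (rootEdges G k v))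
    (hfB : ∀ v s, |f v s| ≤ B) (e : Sym2 V) (s : Finset (Sym2 V)) :
    |∑ v, f v (insert e s) - ∑ v, f v s| ≤ 2 * B * (d + 1) ^ (k + 1) := by
  obtain ⟨a, ha⟩ : ∃ a, a ∈ e := ⟨_, e.out_fst_mem⟩
  rw [← Finset.sum_sub_distrib, ← Finset.sum_subset (Finset.subset_univ (nball G (k + 1) a))]
  · refine (Finset.abs_sum_le_sum_abs _ _).trans ?_
    calc _ ≤ ∑ v ∈ nball G (k + 1) a, 2 * B := Finset.sum_le_sum fun v _ => by
          have h1 := abs_sub (f v (insert e s)) (f v s)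
          linarith [hfB v s, hfB v (insert e s)]
      _ = ((nball G (k + 1) a).card : ℝ) * (2 * B) := by simp
      _ ≤ ((d + 1) ^ (k + 1) : ℕ) * (2 * B) := by
          gcongr
          exact card_nball_le hG _ _
      _ = _ := by push_cast; ring
  · intro v _ hv
    rw [(hf v).insert_eq, sub_self]
    exact fun he => hv (mem_nball_of_mem_rootEdges he ha)

lemma depOn_reachInd (G : SimpleGraph V) (k : ℕ) (v : V) :
    DepOn (reachInd G k v) (rootEdges G k v) :=
  (depOn_reach G k v).comp fun b : Prop => if b then (1 : ℝ) else 0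

lemma edgeInd_nonneg (e : Sym2 V) (s : Finset (Sym2 V)) : 0 ≤ edgeInd e s := by
  unfold edgeInd; split_ifs <;> norm_num

lemma edgeInd_le_one (e : Sym2 V) (s : Finset (Sym2 V)) : edgeInd e s ≤ 1 := by
  unfold edgeInd; split_ifs <;> norm_num

lemma abs_half_degree_sub_one_le {G : SimpleGraph V} {d : ℕ} (hd : 1 ≤ d)
    (hG : ∀ v, (nbrs G v).card ≤ d) (v : V) (s : Finset (Sym2 V)) :
    |1 / 2 * ∑ w ∈ nbrs G v, edgeInd s(v, w) s - 1| ≤ d := by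
  have h0 : 0 ≤ ∑ w ∈ nbrs G v, edgeInd s(v, w) s :=
    Finset.sum_nonneg fun w _ => edgeInd_nonneg _ _
  have h1 : ∑ w ∈ nbrs G v, edgeInd s(v, w) s ≤ d := by
    calc _ ≤ ∑ w ∈ nbrs G v, (1 : ℝ) := Finset.sum_le_sum fun w _ => edgeInd_le_one _ _
      _ ≤ d := by simpa using hG v
  have hd' : (1 : ℝ) ≤ d := by exact_mod_cast hd
  rw [abs_le]
  constructor <;> linarith

lemma abs_reachCount_insert_sub_le {G : SimpleGraph V} {d k : ℕ} (hd : 1 ≤ d)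
    (hG : ∀ v, (nbrs G v).card ≤ d) (e : Sym2 V) (s : Finset (Sym2 V)) :
    |reachCount G k (insert e s) - reachCount G k s| ≤ 2 * d * (d + 1) ^ (k + 1) := by
  refine abs_sum_insert_sub_le hG (Nat.cast_nonneg d) (depOn_reachInd G k) (fun v s => ?_) e s
  have hd' : (1 : ℝ) ≤ d := by exact_mod_cast hd
  unfold reachInd
  split_ifs <;> simp [hd']

lemma abs_localExcess_insert_sub_le {G : SimpleGraph V} {d k : ℕ} (hd : 1 ≤ d)
    (hG : ∀ v, (nbrs G v).card ≤ d) (e : Sym2 V) (s : Finset (Sym2 V)) :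
    |localExcess G k (insert e s) - localExcess G k s| ≤ 2 * d * (d + 1) ^ (k + 1) := by
  refine abs_sum_insert_sub_le hG (Nat.cast_nonneg d)
    (f := fun v s => (1 / 2 * ∑ w ∈ nbrs G v, edgeInd s(v, w) s - 1) * reachInd G k v s)
    (fun v => ?_) (fun v s => ?_) e s
  · refine DepOn.comp₂ (f := fun s => ∑ w ∈ nbrs G v, edgeInd s(v, w) s) ?_
      (depOn_reachInd G k v) fun a b => (1 / 2 * a - 1) * b
    intro s t hst
    refine Finset.sum_congr rfl fun w hw => depOn_edgeInd ?_ s t hst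
    exact Finset.mem_biUnion.2 ⟨w, hw, Finset.mem_insert_self _ _⟩
  · rw [abs_mul]
    have h1 := abs_half_degree_sub_one_le hd hG v s
    have h2 : |reachInd G k v s| ≤ 1 := by
      unfold reachInd
      split_ifs <;> simp
    calc _ ≤ (d : ℝ) * 1 := by gcongr
      _ = d := mul_one _

lemma card_edgeFinset'_le {G : SimpleGraph V} {d : ℕ} (hG : ∀ v, (nbrs G v).card ≤ d) :
    (edgeFinset' G).card ≤ Fintype.card V * d := by
  have : edgeFinset' G ⊆ Finset.univ.biUnion fun v => (nbrs G v).image fun w => s(v, w) := by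
    intro e he
    induction e with
    | _ v w =>
      simp only [Finset.mem_biUnion, Finset.mem_univ, true_and, Finset.mem_image]
      exact ⟨v, w, by simpa using he, rfl⟩
  exact (Finset.card_le_card this).trans (Finset.card_biUnion_le_card_mul _ _ _ fun v _ =>
    Finset.card_image_le.trans (hG v))

lemma exists_tail_const {d : ℕ} (hd : 1 ≤ d) {K a : ℝ} (hK : 0 < K) (ha : 0 < a) :
    ∃ c > (0 : ℝ), ∀ (α : Type) [DecidableEq α] (E : Finset α) (f : Finset α → ℝ) (p n : ℝ),
      0 ≤ p → p ≤ 1 → 0 ≤ n → (E.card : ℝ) ≤ n * d → (∀ e s, |f (insert e s) - f s| ≤ K) →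
      bernExp p E (fun s => if a * n ≤ f s - bernExp p E f then 1 else 0) ≤ Real.exp (-c * n) ∧
      bernExp p E (fun s => if a * n ≤ bernExp p E f - f s then 1 else 0) ≤ Real.exp (-c * n) := by
  have hd' : (0 : ℝ) < d := by exact_mod_cast hd
  set l := min (1 / K) (a / (2 * K ^ 2 * d)) with hl
  have hl0 : 0 < l := lt_min (by positivity) (by positivity)
  have hlK : l * K ≤ 1 := by
    have : l ≤ 1 / K := min_le_left _ _
    rwa [le_div_iff₀ hK] at this
  have hl2 : l * (2 * K ^ 2 * d) ≤ a := by
    have : l ≤ a / (2 * K ^ 2 * d) := min_le_right _ _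
    rwa [le_div_iff₀ (by positivity)] at this
  refine ⟨l * a / 2, by positivity, fun α _ E f p n h0 h1 hn hE hf => ?_⟩
  have hexp : (l * K) ^ 2 * E.card - l * (a * n) ≤ -(l * a / 2) * n := by
    have h2 : (l * K) ^ 2 * E.card ≤ (l * K) ^ 2 * (n * d) := by gcongr
    have h3 : l * (l * (2 * K ^ 2 * d)) * n ≤ l * a * n := by gcongr
    nlinarith
  exact ⟨(bernExp_upper_tail h0 h1 hl0.le hlK E hf).trans (Real.exp_le_exp.2 hexp),
    (bernExp_lower_tail h0 h1 hl0.le hlK E hf).trans (Real.exp_le_exp.2 hexp)⟩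

end Concentration

section Sprinkling

/-- No vertex of `A` is connected to a vertex of `B` by edges of `t`. -/
def Separated (t : Finset (Sym2 V)) (A B : Finset V) : Prop :=
  ∀ a ∈ A, ∀ b ∈ B, ¬ (SimpleGraph.fromEdgeSet (t : Set (Sym2 V))).Reachable a b

lemma Separated.anti {s t : Finset (Sym2 V)} (hst : s ⊆ t) {A B : Finset V}
    (h : Separated t A B) : Separated s A B := fun a ha b hb hr =>
  h a ha b hb (hr.mono (SimpleGraph.fromEdgeSet_mono (Finset.coe_subset.2 hst)))

lemma exists_walk_of_mem_nball {G : SimpleGraph V} {n : ℕ} {a v : V} (h : v ∈ nball G n a) :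
    ∃ w : G.Walk v a, w.length ≤ n := by
  induction n generalizing v with
  | zero =>
    obtain rfl : v = a := by simpa [nball] using h
    exact ⟨.nil, by simp⟩
  | succ n ih =>
    rcases Finset.mem_union.1 h with h | h
    · obtain ⟨w, hw⟩ := ih h
      exact ⟨w, by omega⟩
    · obtain ⟨u, hu, huv⟩ := Finset.mem_biUnion.1 h
      obtain ⟨w, hw⟩ := ih hu
      exact ⟨.cons (mem_nbrs.1 huv).symm w, by simpa using hw⟩

lemma card_growth {G : SimpleGraph V} {b δ : ℝ} {d : ℕ} (hG : IsExpander G b d) (hb : 0 < b)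
    {F : Finset (Sym2 V)} (hF : (F.card : ℝ) ≤ b * δ * Fintype.card V / 2) {S T : Finset V}
    (hS : δ * Fintype.card V ≤ S.card) (hS2 : (S.card : ℝ) ≤ Fintype.card V / 2)
    (hST : ∀ x ∈ S, ∀ y, s(x, y) ∈ edgeFinset' G \ F → y ∈ T) (hsub : S ⊆ T) :
    (S.card : ℝ) * d + b * δ * Fintype.card V / 2 ≤ T.card * d := by
  have h1 := hG.2 S hS2
  have hdeg : ∀ v, (nbrs G v).card ≤ d := fun v => by
    rw [card_nbrs]
    exact hG.1 v
  have h2 : cutCard G S ≤ F.card + (T \ S).card * d := by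
    unfold cutCard
    calc _ ≤ (F ∪ (T \ S).biUnion fun y => (nbrs G y).image fun x => s(x, y)).card := by
          refine Finset.card_le_card fun e he => ?_
          obtain ⟨heG, x, hx, y, hy, rfl⟩ := Finset.mem_filter.1 he
          by_cases heF : s(x, y) ∈ F
          · exact Finset.mem_union_left _ heF
          · refine Finset.mem_union_right _ (Finset.mem_biUnion.2 ⟨y, ?_, ?_⟩)
            · exact Finset.mem_sdiff.2 ⟨hST x hx y (Finset.mem_sdiff.2 ⟨heG, heF⟩), hy⟩
            · refine Finset.mem_image.2 ⟨x, ?_, rfl⟩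
              have : G.Adj x y := by simpa using heG
              simpa using this.symm
      _ ≤ _ := (Finset.card_union_le _ _).trans (by
          gcongr
          exact Finset.card_biUnion_le_card_mul _ _ _ fun y _ =>
            Finset.card_image_le.trans (hdeg y))
  have h3 : ((T \ S).card : ℝ) = T.card - S.card := by
    rw [Finset.card_sdiff_of_subset hsub, Nat.cast_sub (Finset.card_le_card hsub)]
  have h4 : (cutCard G S : ℝ) ≤ F.card + (T \ S).card * d := by exact_mod_cast h2
  rw [h3] at h4
  have h5 : b * (δ * Fintype.card V) ≤ b * S.card := by gcongr
  nlinarith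

lemma card_nball_gt {G : SimpleGraph V} {b δ : ℝ} {d : ℕ} (hG : IsExpander G b d) (hb : 0 < b)
    (hδ : 0 < δ) (hn : 0 < Fintype.card V)
    {F : Finset (Sym2 V)} (hF : (F.card : ℝ) ≤ b * δ * Fintype.card V / 2) {A : Finset V}
    (hA : δ * Fintype.card V ≤ A.card) {j : ℕ} (hj : (d : ℝ) ≤ j * (b * δ)) :
    (Fintype.card V : ℝ) / 2 < (A.biUnion (nball
      (SimpleGraph.fromEdgeSet ((edgeFinset' G \ F : Finset (Sym2 V)) : Set (Sym2 V))) j)).card := by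
  set H := SimpleGraph.fromEdgeSet ((edgeFinset' G \ F : Finset (Sym2 V)) : Set (Sym2 V)) with hH
  have hn' : (0 : ℝ) < Fintype.card V := by exact_mod_cast hn
  have hsub : ∀ i, A.biUnion (nball H i) ⊆ A.biUnion (nball H (i + 1)) := fun i =>
    Finset.biUnion_mono fun a _ => nball_subset_succ H i a
  have key : ∀ i : ℕ, (Fintype.card V : ℝ) / 2 < (A.biUnion (nball H i)).card ∨
      δ * Fintype.card V * d + i * (b * δ * Fintype.card V / 2) ≤
        (A.biUnion (nball H i)).card * d ∧ δ * Fintype.card V ≤ (A.biUnion (nball H i)).card := by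
    intro i
    induction i with
    | zero =>
      right
      have : A.biUnion (nball H 0) = A := by
        ext x
        simp [nball]
      rw [this]
      refine ⟨?_, hA⟩
      simp only [Nat.cast_zero, zero_mul, add_zero]
      gcongr
    | succ i ih =>
      have hle : ((A.biUnion (nball H i)).card : ℝ) ≤ (A.biUnion (nball H (i + 1))).card := by
        exact_mod_cast Finset.card_le_card (hsub i)
      rcases ih with ih | ih
      · left
        linarith
      · by_cases h2 : (Fintype.card V : ℝ) / 2 < (A.biUnion (nball H i)).card
        · left
          linarith
        · right
          refine ⟨?_, ih.2.trans hle⟩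
          have := card_growth hG hb hF ih.2 (not_lt.1 h2) (T := A.biUnion (nball H (i + 1))) (by
            intro x hx y hxy
            obtain ⟨a, ha, hxa⟩ := Finset.mem_biUnion.1 hx
            refine Finset.mem_biUnion.2 ⟨a, ha, Finset.mem_union_right _
              (Finset.mem_biUnion.2 ⟨x, hxa, ?_⟩)⟩
            rw [mem_nbrs, hH, SimpleGraph.fromEdgeSet_adj]
            refine ⟨Finset.mem_coe.2 hxy, ?_⟩
            have : G.Adj x y := by simpa using (Finset.mem_sdiff.1 hxy).1
            exact this.ne) (hsub i)
          push_cast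
          linarith [ih.1]
  rcases key j with h | h
  · exact h
  · by_contra hc
    have h1 := not_lt.1 hc
    have h2 : (d : ℝ) * Fintype.card V ≤ j * (b * δ) * Fintype.card V := by gcongr
    rcases Nat.eq_zero_or_pos d with hd | hd
    · have hSj : ((A.biUnion (nball H j)).card : ℝ) ≤ Fintype.card V / 2 := h1
      have hc0 := hG.2 (A.biUnion (nball H j)) hSj
      have hcut : cutCard G (A.biUnion (nball H j)) = 0 := by
        unfold cutCard
        rw [Finset.card_eq_zero, Finset.filter_eq_empty_iff]
        rintro e he ⟨x, hx, y, hy, rfl⟩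
        have hadj : G.Adj x y := by simpa using he
        have h0 := hG.1 x
        rw [← card_nbrs, hd, Nat.le_zero, Finset.card_eq_zero] at h0
        exact Finset.notMem_empty y (h0 ▸ mem_nbrs.2 hadj)
      rw [hcut] at hc0
      have : 0 < δ * Fintype.card V := by positivity
      have h6 : 0 < b * ((A.biUnion (nball H j)).card : ℝ) := mul_pos hb (by linarith [h.2])
      simp at hc0
      linarith
    · have hd' : (0 : ℝ) < d := by exact_mod_cast hd
      have h3 : ((A.biUnion (nball H j)).card : ℝ) * d ≤ Fintype.card V / 2 * d := by gcongr
      have h4 : 0 < δ * Fintype.card V * d := by positivity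
      linarith [h.1]

lemma exists_short_connection {G : SimpleGraph V} {b δ : ℝ} {d : ℕ} (hG : IsExpander G b d)
    (hb : 0 < b) (hδ : 0 < δ) (hn : 0 < Fintype.card V)
    {F : Finset (Sym2 V)} (hF : (F.card : ℝ) ≤ b * δ * Fintype.card V / 2) {A B : Finset V}
    (hA : δ * Fintype.card V ≤ A.card) (hB : δ * Fintype.card V ≤ B.card)
    {j : ℕ} (hj : (d : ℝ) ≤ j * (b * δ)) :
    ∃ P ⊆ edgeFinset' G \ F, P.card ≤ 2 * j ∧ ¬ Separated P A B := by
  have h1 := card_nball_gt hG hb hδ hn hF hA hj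
  have h2 := card_nball_gt hG hb hδ hn hF hB hj
  set H := SimpleGraph.fromEdgeSet ((edgeFinset' G \ F : Finset (Sym2 V)) : Set (Sym2 V)) with hH
  obtain ⟨v, hv⟩ : (A.biUnion (nball H j) ∩ B.biUnion (nball H j)).Nonempty := by
    rw [Finset.nonempty_iff_ne_empty]
    intro he
    have h3 := Finset.card_union_of_disjoint (Finset.disjoint_iff_inter_eq_empty.2 he)
    have h4 := Finset.card_le_univ (A.biUnion (nball H j) ∪ B.biUnion (nball H j))
    rw [h3] at h4
    have h5 : ((A.biUnion (nball H j)).card : ℝ) + (B.biUnion (nball H j)).card ≤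
      Fintype.card V := by exact_mod_cast h4
    linarith
  obtain ⟨hvA, hvB⟩ := Finset.mem_inter.1 hv
  obtain ⟨x, hx, hvx⟩ := Finset.mem_biUnion.1 hvA
  obtain ⟨y, hy, hvy⟩ := Finset.mem_biUnion.1 hvB
  obtain ⟨w₁, hw₁⟩ := exists_walk_of_mem_nball hvx
  obtain ⟨w₂, hw₂⟩ := exists_walk_of_mem_nball hvy
  set w := w₁.reverse.append w₂ with hw
  refine ⟨w.edges.toFinset, ?_, ?_, ?_⟩
  · intro e he
    have := w.edges_subset_edgeSet (List.mem_toFinset.1 he)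
    rw [hH, SimpleGraph.edgeSet_fromEdgeSet] at this
    exact Finset.mem_coe.1 this.1
  · refine (List.toFinset_card_le _).trans ?_
    rw [SimpleGraph.Walk.length_edges, hw, SimpleGraph.Walk.length_append,
      SimpleGraph.Walk.length_reverse]
    omega
  · intro hsep
    refine hsep x hx y hy (w.transfer _ fun e he => ?_).reachable
    rw [SimpleGraph.edgeSet_fromEdgeSet]
    exact ⟨by simpa using he, H.not_isDiag_of_mem_edgeSet (w.edges_subset_edgeSet he)⟩

lemma bernExp_separated_sdiff_le {G : SimpleGraph V} {b δ p : ℝ} {d : ℕ} (hG : IsExpander G b d)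
    (hb : 0 < b) (hδ : 0 < δ) (hn : 0 < Fintype.card V) (hp : 0 ≤ p) (hp1 : p ≤ 1)
    {A B : Finset V} (hA : δ * Fintype.card V ≤ A.card) (hB : δ * Fintype.card V ≤ B.card)
    {j : ℕ} (hj : (d : ℝ) ≤ j * (b * δ)) (m : ℕ) {F : Finset (Sym2 V)}
    (hF : (F.card : ℝ) + m * (2 * j) ≤ b * δ * Fintype.card V / 2) :
    bernExp p (edgeFinset' G) (fun t => if Separated (t \ F) A B then 1 else 0) ≤
      (1 - p ^ (2 * j)) ^ m := by
  induction m generalizing F with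
  | zero =>
    rw [pow_zero]
    refine (bernExp_mono hp hp1 (g := fun _ => 1) fun t _ => ?_).trans (bernExp_const p _ 1).le
    split_ifs <;> norm_num
  | succ m ih =>
    push_cast at hF
    have hj0 : (0 : ℝ) ≤ j := Nat.cast_nonneg j
    have hm0 : (0 : ℝ) ≤ m := Nat.cast_nonneg m
    obtain ⟨P, hP, hPc, hPs⟩ := exists_short_connection hG hb hδ hn (F := F)
      (by nlinarith [mul_nonneg hm0 hj0]) hA hB hj
    have hPc' : (P.card : ℝ) ≤ 2 * j := by exact_mod_cast hPc
    have hcard : ((F ∪ P).card : ℝ) ≤ F.card + P.card := by exact_mod_cast Finset.card_union_le _ _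
    have ih' := ih (F := F ∪ P) (by linarith)
    have hstep : bernExp p (edgeFinset' G) (fun t => if Separated (t \ F) A B then 1 else 0) ≤
        bernExp p (edgeFinset' G) (fun t => (1 - if P ⊆ t then 1 else 0) *
          if Separated (t \ (F ∪ P)) A B then 1 else 0) := by
      refine bernExp_mono hp hp1 fun t _ => ?_
      by_cases h : Separated (t \ F) A B
      · have h1 : ¬ P ⊆ t := fun hPt => hPs (h.anti fun e he =>
          Finset.mem_sdiff.2 ⟨hPt he, (Finset.mem_sdiff.1 (hP he)).2⟩)
        have h2 : Separated (t \ (F ∪ P)) A B :=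
          h.anti (Finset.sdiff_subset_sdiff le_rfl Finset.subset_union_left)
        simp [h, h1, h2]
      · rw [if_neg h]
        split_ifs <;> norm_num
    refine hstep.trans ?_
    rw [bernExp_mul_of_depOn p _ (D₁ := P) (D₂ := (F ∪ P)ᶜ), bernExp_sub, bernExp_const,
      bernExp_subset p (hP.trans Finset.sdiff_subset), pow_succ, mul_comm]
    · have h1 : p ^ (2 * j) ≤ p ^ P.card := pow_le_pow_of_le_one hp hp1 hPc
      have h2 : p ^ P.card ≤ 1 := pow_le_one₀ hp hp1
      have h3 : 0 ≤ (1 - p ^ (2 * j)) ^ m := pow_nonneg (by linarith) m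
      exact mul_le_mul ih' (by linarith) (by linarith) h3
    · intro s t hst
      have : P ⊆ s ↔ P ⊆ t := by
        rw [← Finset.inter_eq_right, ← Finset.inter_eq_right, hst]
      simp only [this]
    · intro s t hst
      simp only [Finset.sdiff_eq_inter_compl, hst]
    · rw [Finset.disjoint_left]
      intro e he he'
      exact Finset.mem_compl.1 he' (Finset.mem_union_right _ he)

/-- The components of the graph with edge set `s` that have at least `k` vertices. -/
noncomputable def bigComps (s : Finset (Sym2 V)) (k : ℕ) :
    Finset (SimpleGraph.fromEdgeSet (s : Set (Sym2 V))).ConnectedComponent :=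
  Finset.univ.filter fun c => k ≤ (compVerts _ c).card

/-- The vertices of the components in `Q`. -/
noncomputable def unionComps {H : SimpleGraph V} (Q : Finset H.ConnectedComponent) : Finset V :=
  Finset.univ.filter fun v => H.connectedComponentMk v ∈ Q

/-- The big components of `s` split into two large parts that are not connected by `s ∪ t`. -/
def BigSplit (s : Finset (Sym2 V)) (k : ℕ) (x : ℝ) (t : Finset (Sym2 V)) : Prop :=
  ∃ Q ∈ (bigComps s k).powerset, x ≤ (unionComps Q).card ∧
    x ≤ (unionComps (bigComps s k \ Q)).card ∧
    Separated (s ∪ t) (unionComps Q) (unionComps (bigComps s k \ Q))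

lemma card_bigComps_mul_le (s : Finset (Sym2 V)) (k : ℕ) :
    (bigComps s k).card * k ≤ Fintype.card V := by
  rw [← Finset.card_univ, ← smul_eq_mul]
  refine (Finset.card_nsmul_le_sum _ (fun c => (compVerts _ c).card) k fun c hc =>
    (Finset.mem_filter.1 hc).2).trans ?_
  rw [← Finset.card_biUnion]
  · exact Finset.card_le_card (Finset.subset_univ _)
  · intro c _ c' _ hne
    rw [Function.onFun, Finset.disjoint_left]
    intro v hv hv'
    exact hne ((Finset.mem_filter.1 hv).2.symm.trans (Finset.mem_filter.1 hv').2)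

lemma bernExp_bigSplit_le {G : SimpleGraph V} {b δ p : ℝ} {d : ℕ} (hG : IsExpander G b d)
    (hb : 0 < b) (hδ : 0 < δ) (hn : 0 < Fintype.card V) (hp : 0 ≤ p) (hp1 : p ≤ 1)
    {j : ℕ} (hj : (d : ℝ) ≤ j * (b * δ)) {m : ℕ}
    (hm : (m : ℝ) * (2 * j) ≤ b * δ * Fintype.card V / 2) (s : Finset (Sym2 V)) (k : ℕ) :
    bernExp p (edgeFinset' G) (fun t => if BigSplit s k (δ * Fintype.card V) t then 1 else 0) ≤
      2 ^ (bigComps s k).card * (1 - p ^ (2 * j)) ^ m := by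
  have h1 : ∀ t, (if BigSplit s k (δ * Fintype.card V) t then (1 : ℝ) else 0) ≤
      ∑ Q ∈ (bigComps s k).powerset, if δ * Fintype.card V ≤ (unionComps Q).card ∧
        δ * Fintype.card V ≤ (unionComps (bigComps s k \ Q)).card ∧
        Separated (s ∪ t) (unionComps Q) (unionComps (bigComps s k \ Q)) then (1 : ℝ) else 0 := by
    intro t
    have h0 : ∀ Q ∈ (bigComps s k).powerset, (0 : ℝ) ≤ if δ * Fintype.card V ≤ (unionComps Q).card ∧
        δ * Fintype.card V ≤ (unionComps (bigComps s k \ Q)).card ∧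
        Separated (s ∪ t) (unionComps Q) (unionComps (bigComps s k \ Q)) then (1 : ℝ) else 0 := by
      intro Q _
      split_ifs <;> norm_num
    split_ifs with h
    · obtain ⟨Q, hQ, hQ'⟩ := h
      refine le_trans ?_ (Finset.single_le_sum h0 hQ)
      rw [if_pos hQ']
    · exact Finset.sum_nonneg h0
  refine (bernExp_mono hp hp1 fun t _ => h1 t).trans ?_
  rw [bernExp_sum]
  have h2 : ∀ Q ∈ (bigComps s k).powerset, bernExp p (edgeFinset' G) (fun t =>
      if δ * Fintype.card V ≤ (unionComps Q).card ∧
        δ * Fintype.card V ≤ (unionComps (bigComps s k \ Q)).card ∧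
        Separated (s ∪ t) (unionComps Q) (unionComps (bigComps s k \ Q)) then (1 : ℝ) else 0) ≤
      (1 - p ^ (2 * j)) ^ m := by
    intro Q _
    by_cases hQ : δ * Fintype.card V ≤ (unionComps Q).card ∧
        δ * Fintype.card V ≤ (unionComps (bigComps s k \ Q)).card
    · refine le_trans (bernExp_mono hp hp1 fun t _ => ?_)
        (bernExp_separated_sdiff_le hG hb hδ hn hp hp1 hQ.1 hQ.2 hj m (F := ∅) (by simpa using hm))
      split_ifs with h3 h4
      · exact le_rfl
      · exact absurd (h3.2.2.anti (Finset.sdiff_subset.trans Finset.subset_union_right)) h4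
      · norm_num
      · exact le_rfl
    · have : ∀ t ⊆ edgeFinset' G, (if δ * Fintype.card V ≤ (unionComps Q).card ∧
        δ * Fintype.card V ≤ (unionComps (bigComps s k \ Q)).card ∧
        Separated (s ∪ t) (unionComps Q) (unionComps (bigComps s k \ Q)) then (1 : ℝ) else 0) = 0 :=
        fun t _ => if_neg fun h => hQ ⟨h.1, h.2.1⟩
      rw [bernExp_congr this, bernExp_const]
      have : p ^ (2 * j) ≤ 1 := pow_le_one₀ hp hp1
      exact pow_nonneg (by linarith) m
  refine (Finset.sum_le_sum h2).trans ?_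
  rw [Finset.sum_const, Finset.card_powerset, nsmul_eq_mul]
  push_cast
  exact le_rfl

end Sprinkling

section Giant

lemma card_largest_class_symmDiff_le {C : Type*} [Fintype C] (c : V → C) (B X : Finset V)
    {D e M : ℝ} (hD : 0 < D) (he : 0 ≤ e) (hM : 0 ≤ M) (hBX : ((X \ B).card : ℝ) ≤ e)
    (hQ : ∀ Q : Finset C, ((B.filter fun v => c v ∈ Q).card : ℝ) < D ∨
      ((B.filter fun v => c v ∉ Q).card : ℝ) < D)
    (hcl : ∀ γ, ((Finset.univ.filter fun v => c v = γ).card : ℝ) ≤ M ∨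
      (Finset.univ.filter fun v => c v = γ) ⊆ X) (γ : C)
    (hγ : ∀ γ', (Finset.univ.filter fun v => c v = γ').card ≤
      (Finset.univ.filter fun v => c v = γ).card) :
    ((X \ Finset.univ.filter fun v => c v = γ).card : ℝ) +
      ((Finset.univ.filter fun v => c v = γ) \ X).card ≤ 4 * D + 3 * e + 2 * M := by
  set A := Finset.univ.filter fun v => c v = γ with hA
  have hAX : ((A \ X).card : ℝ) ≤ M := by
    rcases hcl γ with h | h
    · refine le_trans ?_ h
      exact_mod_cast Finset.card_le_card Finset.sdiff_subset
    · rw [Finset.sdiff_eq_empty_iff_subset.2 h]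
      simpa using hM
  rcases hQ {γ} with h | h
  · have hAc : (A.card : ℝ) ≤ D + e + M := by
      rcases hcl γ with h' | h'
      · linarith
      · have h1 : A ⊆ (X \ B) ∪ B.filter fun v => c v ∈ ({γ} : Finset C) := by
          intro v hv
          by_cases hvB : v ∈ B
          · refine Finset.mem_union_right _ (Finset.mem_filter.2 ⟨hvB, ?_⟩)
            simpa using (Finset.mem_filter.1 hv).2
          · exact Finset.mem_union_left _ (Finset.mem_sdiff.2 ⟨h' hv, hvB⟩)
        have h2 : (A.card : ℝ) ≤ (X \ B).card + (B.filter fun v => c v ∈ ({γ} : Finset C)).card := by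
          exact_mod_cast (Finset.card_le_card h1).trans (Finset.card_union_le _ _)
        linarith
    have key : ∀ Q : Finset C, ((B.filter fun v => c v ∈ Q).card : ℝ) < D ∨
        (B.card : ℝ) < 2 * D + (D + e + M) := by
      intro Q
      induction Q using Finset.induction_on with
      | empty =>
        left
        simpa using hD
      | insert γ' Q _ ih =>
        rcases ih with ih | ih
        · rcases hQ (insert γ' Q) with h' | h'
          · exact Or.inl h'
          · right
            have h1 : B ⊆ ((B.filter fun v => c v ∈ Q) ∪ Finset.univ.filter fun v => c v = γ') ∪
                B.filter fun v => c v ∉ insert γ' Q := by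
              intro v hv
              simp only [Finset.mem_union, Finset.mem_filter, Finset.mem_insert, Finset.mem_univ,
                true_and, hv]
              tauto
            have h2 := (Finset.card_le_card h1).trans (Finset.card_union_le _ _)
            have h3 := Finset.card_union_le (B.filter fun v => c v ∈ Q)
              (Finset.univ.filter fun v => c v = γ')
            have h4 : (B.card : ℝ) ≤ ((B.filter fun v => c v ∈ Q).card + A.card) +
                (B.filter fun v => c v ∉ insert γ' Q).card := by
              have := hγ γ'
              exact_mod_cast (by omega : B.card ≤ ((B.filter fun v => c v ∈ Q).card + A.card) +
                (B.filter fun v => c v ∉ insert γ' Q).card)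
            linarith
        · exact Or.inr ih
    have hB : (B.card : ℝ) < 2 * D + (D + e + M) := by
      rcases key Finset.univ with h' | h'
      · have : (B.filter fun v => c v ∈ (Finset.univ : Finset C)) = B := by simp
        rw [this] at h'
        linarith
      · exact h'
    have h5 : X \ A ⊆ (X \ B) ∪ B := by
      intro v hv
      by_cases hvB : v ∈ B
      · exact Finset.mem_union_right _ hvB
      · exact Finset.mem_union_left _ (Finset.mem_sdiff.2 ⟨(Finset.mem_sdiff.1 hv).1, hvB⟩)
    have h6 : ((X \ A).card : ℝ) ≤ (X \ B).card + B.card := by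
      exact_mod_cast (Finset.card_le_card h5).trans (Finset.card_union_le _ _)
    linarith
  · have h5 : X \ A ⊆ (X \ B) ∪ B.filter fun v => c v ∉ ({γ} : Finset C) := by
      intro v hv
      obtain ⟨hvX, hvA⟩ := Finset.mem_sdiff.1 hv
      by_cases hvB : v ∈ B
      · refine Finset.mem_union_right _ (Finset.mem_filter.2 ⟨hvB, ?_⟩)
        simpa [hA] using hvA
      · exact Finset.mem_union_left _ (Finset.mem_sdiff.2 ⟨hvX, hvB⟩)
    have h6 : ((X \ A).card : ℝ) ≤ (X \ B).card + (B.filter fun v => c v ∉ ({γ} : Finset C)).card := by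
      exact_mod_cast (Finset.card_le_card h5).trans (Finset.card_union_le _ _)
    linarith

lemma card_filter_lt_of_not_bigSplit {s t : Finset (Sym2 V)} {k : ℕ} {x : ℝ}
    (h : ¬ BigSplit s k x t)
    (Q : Finset (SimpleGraph.fromEdgeSet ((s ∪ t : Finset (Sym2 V)) : Set (Sym2 V))).ConnectedComponent) :
    (((unionComps (bigComps s k)).filter fun v => (SimpleGraph.fromEdgeSet
      ((s ∪ t : Finset (Sym2 V)) : Set (Sym2 V))).connectedComponentMk v ∈ Q).card : ℝ) < x ∨
    (((unionComps (bigComps s k)).filter fun v => (SimpleGraph.fromEdgeSet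
      ((s ∪ t : Finset (Sym2 V)) : Set (Sym2 V))).connectedComponentMk v ∉ Q).card : ℝ) < x := by
  by_contra hc
  push Not at hc
  have hle : SimpleGraph.fromEdgeSet (s : Set (Sym2 V)) ≤
      SimpleGraph.fromEdgeSet ((s ∪ t : Finset (Sym2 V)) : Set (Sym2 V)) :=
    SimpleGraph.fromEdgeSet_mono (Finset.coe_subset.2 Finset.subset_union_left)
  set Qs := (bigComps s k).filter fun c => c.map (SimpleGraph.Hom.ofLE hle) ∈ Q with hQs
  have h1 : unionComps Qs = (unionComps (bigComps s k)).filter fun v => (SimpleGraph.fromEdgeSet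
      ((s ∪ t : Finset (Sym2 V)) : Set (Sym2 V))).connectedComponentMk v ∈ Q := by
    ext v
    simp only [unionComps, hQs, Finset.mem_filter, Finset.mem_univ, true_and]
    rfl
  have h2 : unionComps (bigComps s k \ Qs) = (unionComps (bigComps s k)).filter fun v =>
      (SimpleGraph.fromEdgeSet
      ((s ∪ t : Finset (Sym2 V)) : Set (Sym2 V))).connectedComponentMk v ∉ Q := by
    ext v
    simp only [unionComps, hQs, Finset.mem_filter, Finset.mem_univ, true_and, Finset.mem_sdiff,
      not_and]
    constructor
    · rintro ⟨h3, h4⟩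
      exact ⟨h3, h4 h3⟩
    · rintro ⟨h3, h4⟩
      exact ⟨h3, fun _ => h4⟩
  refine h ⟨Qs, Finset.mem_powerset.2 (Finset.filter_subset _ _), ?_, ?_, ?_⟩
  · rw [h1]
    exact hc.1
  · rw [h2]
    exact hc.2
  · rw [h1, h2]
    intro a ha b' hb' hr
    refine (Finset.mem_filter.1 hb').2 ?_
    rw [← SimpleGraph.ConnectedComponent.eq.2 hr]
    exact (Finset.mem_filter.1 ha).2

lemma two_mul_card_compEdges (H : SimpleGraph V) (c : H.ConnectedComponent) :
    2 * (compEdges H c).card = ∑ v ∈ compVerts H c, (nbrs H v).card := by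
  have h := Finset.sum_card_bipartiteAbove_eq_sum_card_bipartiteBelow
    (s := compVerts H c) (t := compEdges H c) (fun v e => v ∈ e)
  have h1 : ∀ v ∈ compVerts H c,
      (Finset.bipartiteAbove (fun v e => v ∈ e) (compEdges H c) v).card = (nbrs H v).card := by
    intro v hv
    have hvc : H.connectedComponentMk v = c := by simpa [compVerts] using hv
    have : Finset.bipartiteAbove (fun v e => v ∈ e) (compEdges H c) v =
        (nbrs H v).image fun w => s(v, w) := by
      ext e
      simp only [Finset.bipartiteAbove, Finset.mem_filter, Finset.mem_image, mem_nbrs, compEdges,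
        mem_edgeFinset']
      constructor
      · rintro ⟨⟨he, -⟩, hve⟩
        obtain ⟨w, rfl⟩ := hve
        exact ⟨w, he, rfl⟩
      · rintro ⟨w, hw, rfl⟩
        refine ⟨⟨hw, fun u hu => ?_⟩, Sym2.mem_mk_left _ _⟩
        rcases Sym2.mem_iff.1 hu with rfl | rfl
        · exact hvc
        · rw [← hvc]
          exact SimpleGraph.ConnectedComponent.eq.2 hw.symm.reachable
    rw [this, Finset.card_image_of_injective _ fun a b' hab => Sym2.congr_right.1 hab]
  have h2 : ∀ e ∈ compEdges H c,
      (Finset.bipartiteBelow (fun v e => v ∈ e) (compVerts H c) e).card = 2 := by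
    intro e he
    obtain ⟨heH, hec⟩ := Finset.mem_filter.1 he
    induction e with
    | h a b' =>
      have hab : H.Adj a b' := by simpa using heH
      have : Finset.bipartiteBelow (fun v e => v ∈ e) (compVerts H c) s(a, b') = {a, b'} := by
        ext v
        simp only [Finset.bipartiteBelow, Finset.mem_filter, compVerts, Finset.mem_univ, true_and,
          Sym2.mem_iff, Finset.mem_insert, Finset.mem_singleton]
        refine ⟨fun h => h.2, fun h => ⟨hec v (Sym2.mem_iff.2 h), h⟩⟩
      rw [this, Finset.card_pair hab.ne]
  rw [Finset.sum_congr rfl h1, Finset.sum_congr rfl h2, Finset.sum_const, smul_eq_mul] at h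
  rw [h, mul_comm]

lemma card_nbrs_fromEdgeSet {G : SimpleGraph V} {s : Finset (Sym2 V)} (hs : s ⊆ edgeFinset' G)
    (v : V) : ((nbrs (SimpleGraph.fromEdgeSet (s : Set (Sym2 V))) v).card : ℝ) =
      ∑ w ∈ nbrs G v, edgeInd s(v, w) s := by
  have : nbrs (SimpleGraph.fromEdgeSet (s : Set (Sym2 V))) v =
      (nbrs G v).filter fun w => s(v, w) ∈ s := by
    ext w
    simp only [mem_nbrs, SimpleGraph.fromEdgeSet_adj, Finset.mem_coe, Finset.mem_filter]
    constructor
    · rintro ⟨h, -⟩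
      exact ⟨by simpa using hs h, h⟩
    · rintro ⟨h, h'⟩
      exact ⟨h', h.ne⟩
  rw [this, Finset.card_filter]
  push_cast
  rfl

lemma abs_excess_sub_localExcess_le {G : SimpleGraph V} {d g : ℕ} (hd : 1 ≤ d)
    (hG : ∀ v, (nbrs G v).card ≤ d)
    (hg : ∀ (a : V) (c : G.Walk a a), c.IsCycle → g ≤ c.length) {k : ℕ} (hk : k + 1 < g)
    {s t : Finset (Sym2 V)} (hs : s ⊆ edgeFinset' G) (ht : t ⊆ edgeFinset' G) {x e : ℝ}
    (hx : 0 < x) (he : reachCount G k (s ∪ t) - reachCount G k s ≤ e)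
    (hB : ¬ BigSplit s (k + 2) x t)
    {H : SimpleGraph V} (hH : H = SimpleGraph.fromEdgeSet ((s ∪ t : Finset (Sym2 V)) : Set (Sym2 V)))
    {γ : H.ConnectedComponent} (hγ : IsLargestComp H γ) :
    |((compEdges _ γ).card : ℝ) - (compVerts _ γ).card - localExcess G k (s ∪ t)| ≤
      d * (4 * x + 3 * e + 2 * ((d : ℝ) + 1) ^ k) := by
  have hst : s ∪ t ⊆ edgeFinset' G := Finset.union_subset hs ht
  set X := Finset.univ.filter fun v => Reach G (s ∪ t) k v with hX
  set X₁ := Finset.univ.filter fun v => Reach G s k v with hX₁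
  set B := unionComps (bigComps s (k + 2)) with hBdef
  have hX₁B : X₁ ⊆ B := by
    intro v hv
    simp only [hBdef, unionComps, bigComps, Finset.mem_filter, Finset.mem_univ, true_and]
    exact le_card_compVerts_of_reach hg hk (Finset.mem_filter.1 hv).2
  have hX₁X : X₁ ⊆ X := fun v hv => Finset.mem_filter.2
    ⟨Finset.mem_univ _, (Finset.mem_filter.1 hv).2.mono Finset.subset_union_left⟩
  have hcount : ∀ u, reachCount G k u = ((Finset.univ.filter fun v => Reach G u k v).card : ℝ) := by
    intro u
    rw [Finset.card_filter]
    push_cast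
    rfl
  have hXB : ((X \ B).card : ℝ) ≤ e := by
    refine le_trans ?_ he
    rw [hcount, hcount]
    have h1 := Finset.card_le_card (Finset.sdiff_subset_sdiff (le_refl X) hX₁B)
    have h2 := Finset.card_sdiff_add_card_eq_card hX₁X
    have h3 : ((X \ B).card : ℝ) + X₁.card ≤ X.card := by exact_mod_cast (by omega)
    linarith
  have he0 : 0 ≤ e := (Nat.cast_nonneg _).trans hXB
  have key := card_largest_class_symmDiff_le H.connectedComponentMk B X hx he0
    (M := ((d : ℝ) + 1) ^ k) (by positivity) hXB (by
      subst hH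
      exact card_filter_lt_of_not_bigSplit hB) (by
      intro c
      by_cases hc : (Finset.univ.filter fun v => H.connectedComponentMk v = c) ⊆ X
      · exact Or.inr hc
      · left
        obtain ⟨v, hv, hvX⟩ := Finset.not_subset.1 hc
        have hvc : H.connectedComponentMk v = c := (Finset.mem_filter.1 hv).2
        have hr : ¬ Reach G (s ∪ t) k v := fun h => hvX (Finset.mem_filter.2 ⟨Finset.mem_univ _, h⟩)
        have h1 := compVerts_subset_nball hst hr
        have h2 := (Finset.card_le_card h1).trans (card_nball_le hG k v)
        rw [← hH, hvc] at h2
        exact_mod_cast h2) γ hγ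
  set A := Finset.univ.filter fun v => H.connectedComponentMk v = γ with hA
  have hA' : compVerts H γ = A := rfl
  set f : V → ℝ := fun v => 1 / 2 * ∑ w ∈ nbrs G v, edgeInd s(v, w) (s ∪ t) - 1 with hf
  have h1 : ((compEdges H γ).card : ℝ) - (compVerts H γ).card = ∑ v ∈ A, f v := by
    have h2 : (2 : ℝ) * (compEdges H γ).card = ∑ v ∈ A, ∑ w ∈ nbrs G v, edgeInd s(v, w) (s ∪ t) := by
      rw [← Finset.sum_congr rfl fun v _ => card_nbrs_fromEdgeSet hst v, ← hH]
      exact_mod_cast two_mul_card_compEdges H γ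
    simp only [hf]
    rw [Finset.sum_sub_distrib, ← Finset.mul_sum, ← h2, hA']
    simp
  have h2 : localExcess G k (s ∪ t) = ∑ v ∈ X, f v := by
    unfold localExcess
    rw [hX, Finset.sum_filter]
    refine Finset.sum_congr rfl fun v _ => ?_
    simp only [reachInd, hf]
    split_ifs <;> simp
  have hfd : ∀ v, |f v| ≤ d := fun v => abs_half_degree_sub_one_le hd hG v _
  have h3 : ∀ S : Finset V, |∑ v ∈ S, f v| ≤ d * S.card := fun S => by
    refine (Finset.abs_sum_le_sum_abs _ _).trans ((Finset.sum_le_sum fun v _ => hfd v).trans ?_)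
    rw [Finset.sum_const, nsmul_eq_mul, mul_comm]
  have h4 : ∑ v ∈ A, f v - ∑ v ∈ X, f v = ∑ v ∈ A \ X, f v - ∑ v ∈ X \ A, f v :=
    (Finset.sum_sdiff_sub_sum_sdiff).symm
  rw [h1, h2, h4]
  calc _ ≤ |∑ v ∈ A \ X, f v| + |∑ v ∈ X \ A, f v| := abs_sub _ _
    _ ≤ d * (A \ X).card + d * (X \ A).card := add_le_add (h3 _) (h3 _)
    _ = d * ((X \ A).card + (A \ X).card) := by ring
    _ ≤ _ := by gcongr

end Giant

section TwoCore

variable {H : SimpleGraph V} {c : H.ConnectedComponent}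

lemma twoCoreComp_adj {v w : V} (h : (twoCoreComp H c).Adj v w) : ∃ J : SimpleGraph V,
    J ≤ twoCoreComp H c ∧ J.Adj v w ∧ J ≤ H ∧
      (∀ v ∈ J.support, H.connectedComponentMk v = c) ∧
      ∀ v ∈ J.support, 2 ≤ (J.neighborSet v).ncard := by
  obtain ⟨J, hJ, hvw⟩ := SimpleGraph.sSup_adj.1 h
  exact ⟨J, le_sSup hJ, hvw, hJ⟩

lemma twoCoreComp_le : twoCoreComp H c ≤ H := fun _ _ h => by
  obtain ⟨J, -, hvw, hJ, -⟩ := twoCoreComp_adj h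
  exact hJ hvw

lemma mk_eq_of_mem_support_twoCoreComp {v : V} (hv : v ∈ (twoCoreComp H c).support) :
    H.connectedComponentMk v = c := by
  obtain ⟨w, hw⟩ := hv
  obtain ⟨J, -, hvw, -, hJ, -⟩ := twoCoreComp_adj hw
  exact hJ v ⟨w, hvw⟩

lemma two_le_ncard_neighborSet_twoCoreComp {v : V} (hv : v ∈ (twoCoreComp H c).support) :
    2 ≤ ((twoCoreComp H c).neighborSet v).ncard := by
  obtain ⟨w, hw⟩ := hv
  obtain ⟨J, hle, hvw, -, -, hJ⟩ := twoCoreComp_adj hw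
  exact (hJ v ⟨w, hvw⟩).trans (Set.ncard_le_ncard (fun _ hu => hle hu) (Set.toFinite _))

lemma ncard_edgeSet_add_support_le {J : SimpleGraph V} (hKJ : twoCoreComp H c ≤ J) (hJH : J ≤ H)
    (hJ : ∀ v ∈ J.support, H.connectedComponentMk v = c) :
    J.edgeSet.ncard + (twoCoreComp H c).support.ncard ≤
      (twoCoreComp H c).edgeSet.ncard + J.support.ncard := by
  induction hm : J.edgeSet.ncard generalizing J with
  | zero =>
    have h := Set.ncard_le_ncard (SimpleGraph.support_mono hKJ) (Set.toFinite _)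
    omega
  | succ m ih =>
    by_cases hdeg : ∀ v ∈ J.support, 2 ≤ (J.neighborSet v).ncard
    · have hle : J ≤ twoCoreComp H c := le_sSup ⟨hJH, hJ, hdeg⟩
      have : J = twoCoreComp H c := le_antisymm hle hKJ
      rw [← hm, this]
    · push Not at hdeg
      obtain ⟨v, ⟨w, hvw⟩, hv⟩ := hdeg
      have hvJ : v ∈ J.support := ⟨w, hvw⟩
      have hvK : v ∉ (twoCoreComp H c).support := fun h => by
        have h1 := two_le_ncard_neighborSet_twoCoreComp h
        have h2 := Set.ncard_le_ncard (s := (twoCoreComp H c).neighborSet v) (t := J.neighborSet v)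
          (fun _ hu => hKJ hu) (Set.toFinite _)
        omega
      have huniq : ∀ u, J.Adj v u → u = w := fun u hu => by
        have h1 : (J.neighborSet v).ncard ≤ 1 := by omega
        exact (Set.ncard_le_one (Set.toFinite _)).1 h1 u hu w hvw
      have hE : (J.deleteEdges {s(v, w)}).edgeSet.ncard = m := by
        rw [SimpleGraph.edgeSet_deleteEdges, Set.ncard_sdiff_singleton_of_mem (by exact hvw)]
        omega
      have hle : J.deleteEdges {s(v, w)} ≤ J := SimpleGraph.deleteEdges_le _
      have hvJ' : v ∉ (J.deleteEdges {s(v, w)}).support := by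
        rintro ⟨u, hu⟩
        replace hu : J.Adj v u ∧ s(v, u) ∉ ({s(v, w)} : Set (Sym2 V)) :=
          SimpleGraph.deleteEdges_adj.1 hu
        obtain rfl := huniq u hu.1
        exact hu.2 rfl
      have hsub := SimpleGraph.support_mono hle
      have h1 := ih (J := J.deleteEdges {s(v, w)}) (fun a b' hab => by
          rw [SimpleGraph.deleteEdges_adj]
          refine ⟨hKJ hab, fun he => ?_⟩
          rcases Sym2.eq_iff.1 (Set.mem_singleton_iff.1 he) with ⟨rfl, -⟩ | ⟨-, rfl⟩
          · exact hvK ⟨_, hab⟩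
          · exact hvK ⟨_, hab.symm⟩) (hle.trans hJH) (fun u hu => hJ u (hsub hu)) hE
      have h2 := Set.ncard_lt_ncard (s := (J.deleteEdges {s(v, w)}).support) (t := J.support)
        ⟨hsub, fun h => hvJ' (h hvJ)⟩ (Set.toFinite _)
      omega

lemma exists_adj_closer {S : Finset V} (hS : S.Nonempty)
    (hSc : ∀ v ∈ S, H.connectedComponentMk v = c) : ∃ D : V → ℕ, ∀ v,
      H.connectedComponentMk v = c → v ∉ S → ∃ w, H.Adj v w ∧ D w < D v := by
  refine ⟨fun v => sInf {n | ∃ u ∈ S, ∃ w : H.Walk v u, w.length = n}, fun v hv hvS => ?_⟩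
  have hne : {n | ∃ u ∈ S, ∃ w : H.Walk v u, w.length = n}.Nonempty := by
    obtain ⟨u, hu⟩ := hS
    obtain ⟨w⟩ := SimpleGraph.ConnectedComponent.eq.1 (hv.trans (hSc u hu).symm)
    exact ⟨_, u, hu, w, rfl⟩
  obtain ⟨u, hu, w, hw⟩ := Nat.sInf_mem hne
  cases w with
  | nil => exact absurd hu hvS
  | cons h w' =>
    refine ⟨_, h, ?_⟩
    refine lt_of_lt_of_eq ?_ hw
    exact Nat.lt_of_le_of_lt (Nat.sInf_le ⟨u, hu, w', rfl⟩) (by simp)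

lemma card_compVerts_add_le {S : Finset V} (hS : S.Nonempty)
    (hSc : ∀ v ∈ S, H.connectedComponentMk v = c)
    (hKS : ∀ v ∈ (twoCoreComp H c).support, v ∈ S) :
    (compVerts H c).card + (twoCoreComp H c).edgeSet.ncard ≤ (compEdges H c).card + S.card := by
  obtain ⟨D, hD⟩ := exists_adj_closer hS hSc
  have hSsub : S ⊆ compVerts H c := fun v hv =>
    Finset.mem_filter.2 ⟨Finset.mem_univ _, hSc v hv⟩
  have hD' : ∀ v ∈ compVerts H c \ S, ∃ w, H.Adj v w ∧ D w < D v := fun v hv =>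
    hD v (Finset.mem_filter.1 (Finset.mem_sdiff.1 hv).1).2 (Finset.mem_sdiff.1 hv).2
  choose! f hf using hD'
  have hK : (twoCoreComp H c).edgeSet.ncard = (edgeFinset' (twoCoreComp H c)).card := by
    rw [← Set.ncard_coe_finset]
    congr 1
    ext e
    simp
  have hKc : edgeFinset' (twoCoreComp H c) ⊆ compEdges H c := by
    intro e he
    rw [mem_edgeFinset'] at he
    refine Finset.mem_filter.2 ⟨?_, fun v hv => ?_⟩
    · rw [mem_edgeFinset']
      exact SimpleGraph.edgeSet_mono twoCoreComp_le he
    · obtain ⟨w, rfl⟩ := hv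
      exact mk_eq_of_mem_support_twoCoreComp ⟨w, he⟩
  have hle : (compVerts H c \ S).card ≤ (compEdges H c \ edgeFinset' (twoCoreComp H c)).card := by
    refine Finset.card_le_card_of_injOn (fun v => s(v, f v)) ?_ ?_
    · intro v hv
      have hv' := Finset.mem_sdiff.1 (Finset.mem_coe.1 hv)
      have hvc : H.connectedComponentMk v = c := (Finset.mem_filter.1 hv'.1).2
      have hadj := (hf v (Finset.mem_coe.1 hv)).1
      refine Finset.mem_coe.2 (Finset.mem_sdiff.2 ⟨Finset.mem_filter.2 ⟨?_, fun u hu => ?_⟩, ?_⟩)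
      · rw [mem_edgeFinset']
        exact hadj
      · rcases Sym2.mem_iff.1 hu with rfl | rfl
        · exact hvc
        · rw [← hvc]
          exact SimpleGraph.ConnectedComponent.eq.2 hadj.symm.reachable
      · rw [mem_edgeFinset']
        exact fun h => hv'.2 (hKS v ⟨_, h⟩)
    · intro v hv v' hv' h
      rcases Sym2.eq_iff.1 h with ⟨h1, -⟩ | ⟨h1, h2⟩
      · exact h1
      · have h3 := (hf v hv).2
        have h4 := (hf v' hv').2
        rw [h2] at h3
        rw [← h1] at h4
        omega
  have h1 := Finset.card_sdiff_add_card_eq_card hSsub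
  have h2 := Finset.card_sdiff_add_card_eq_card hKc
  omega

lemma abs_twoCoreComp_excess_sub_le :
    |(((twoCoreComp H c).edgeSet.ncard : ℝ) - (twoCoreComp H c).support.ncard) -
      ((compEdges H c).card - (compVerts H c).card)| ≤ 1 := by
  have hJadj : ∀ {v w}, (SimpleGraph.fromEdgeSet (compEdges H c : Set (Sym2 V))).Adj v w ↔
      H.Adj v w ∧ H.connectedComponentMk v = c := by
    intro v w
    rw [SimpleGraph.fromEdgeSet_adj, Finset.mem_coe, compEdges, Finset.mem_filter, mem_edgeFinset']
    constructor
    · rintro ⟨⟨h1, h2⟩, -⟩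
      exact ⟨h1, h2 v (Sym2.mem_mk_left _ _)⟩
    · rintro ⟨h1, h2⟩
      refine ⟨⟨h1, fun u hu => ?_⟩, h1.ne⟩
      rcases Sym2.mem_iff.1 hu with rfl | rfl
      · exact h2
      · rw [← h2]
        exact SimpleGraph.ConnectedComponent.eq.2 h1.symm.reachable
  have h1 := ncard_edgeSet_add_support_le
    (J := SimpleGraph.fromEdgeSet (compEdges H c : Set (Sym2 V))) (c := c)
    (fun v w h => hJadj.2 ⟨twoCoreComp_le h, mk_eq_of_mem_support_twoCoreComp ⟨w, h⟩⟩)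
    (fun v w h => (hJadj.1 h).1) (fun v ⟨w, h⟩ => (hJadj.1 h).2)
  have h2 : (SimpleGraph.fromEdgeSet (compEdges H c : Set (Sym2 V))).edgeSet.ncard =
      (compEdges H c).card := by
    rw [← Set.ncard_coe_finset, SimpleGraph.edgeSet_fromEdgeSet]
    congr 1
    ext e
    refine ⟨fun h => h.1, fun h => ⟨h, ?_⟩⟩
    exact H.not_isDiag_of_mem_edgeSet (mem_edgeFinset'.1 (Finset.mem_filter.1 h).1)
  have h3 : (SimpleGraph.fromEdgeSet (compEdges H c : Set (Sym2 V))).support.ncard ≤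
      (compVerts H c).card := by
    rw [← Set.ncard_coe_finset]
    refine Set.ncard_le_ncard ?_ (Set.toFinite _)
    rintro v ⟨w, h⟩
    exact Finset.mem_coe.2 (Finset.mem_filter.2 ⟨Finset.mem_univ _, (hJadj.1 h).2⟩)
  have h4 : (compVerts H c).card + (twoCoreComp H c).edgeSet.ncard ≤
      (compEdges H c).card + ((twoCoreComp H c).support.ncard + 1) := by
    induction c using SimpleGraph.ConnectedComponent.ind with
    | h r =>
      refine (card_compVerts_add_le (S := insert r (Finset.univ.filter fun v =>
        v ∈ (twoCoreComp H (H.connectedComponentMk r)).support)) ⟨r, by simp⟩ ?_ ?_).trans ?_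
      · intro v hv
        rcases Finset.mem_insert.1 hv with rfl | hv
        · rfl
        · exact mk_eq_of_mem_support_twoCoreComp (Finset.mem_filter.1 hv).2
      · intro v hv
        exact Finset.mem_insert_of_mem (Finset.mem_filter.2 ⟨Finset.mem_univ _, hv⟩)
      · gcongr
        refine (Finset.card_insert_le _ _).trans ?_
        rw [← Set.ncard_coe_finset]
        simp
  rw [h2] at h1
  have h5 : ((compEdges H c).card : ℝ) + (twoCoreComp H c).support.ncard ≤
      (twoCoreComp H c).edgeSet.ncard + (compVerts H c).card := by
    exact_mod_cast h1.trans (by omega)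
  have h6 : ((compVerts H c).card : ℝ) + (twoCoreComp H c).edgeSet.ncard ≤
      (compEdges H c).card + ((twoCoreComp H c).support.ncard + 1) := by exact_mod_cast h4
  rw [abs_le]
  constructor <;> linarith

end TwoCore

section Assembly

lemma exists_bigSplit_const {d : ℕ} {b δ p : ℝ} (hb : 0 < b) (hδ : 0 < δ) (hp : 0 < p)
    (hp1 : p < 1) : ∃ c > (0 : ℝ), ∃ k₀ : ℕ, ∀ k ≥ k₀, ∀ (V : Type) [Fintype V] [DecidableEq V]
      (G : SimpleGraph V) (s : Finset (Sym2 V)), IsExpander G b d → 0 < Fintype.card V →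
      bernExp p (edgeFinset' G) (fun t => if BigSplit s k (δ * Fintype.card V) t then 1 else 0) ≤
        3 * Real.exp (-c * Fintype.card V) := by
  have hbδ : 0 < b * δ := mul_pos hb hδ
  obtain ⟨j₀, hj₀⟩ := exists_nat_ge ((d : ℝ) / (b * δ))
  set j := j₀ + 1 with hjdef
  have hj : (d : ℝ) ≤ j * (b * δ) := by
    rw [div_le_iff₀ hbδ] at hj₀
    push_cast [hjdef]
    nlinarith
  have hj1 : (0 : ℝ) < j := by positivity
  set r := p ^ (2 * j) with hr
  have hr0 : 0 < r := by positivity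
  have hr1 : r ≤ 1 := pow_le_one₀ hp.le hp1.le
  set β := b * δ / (4 * j) with hβ
  have hβ0 : 0 < β := by positivity
  obtain ⟨k₀, hk₀⟩ := exists_nat_ge (2 / (r * β))
  refine ⟨r * β / 2, by positivity, k₀ + 1, fun k hk V _ _ G s hG hn => ?_⟩
  set n : ℝ := (Fintype.card V : ℝ)
  have hn0 : 0 ≤ n := Nat.cast_nonneg _
  set m := ⌊β * n⌋₊ with hm
  have hm1 : (m : ℝ) ≤ β * n := Nat.floor_le (by positivity)
  have hm2 : β * n < m + 1 := Nat.lt_floor_add_one _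
  have hmj : (m : ℝ) * (2 * j) ≤ b * δ * n / 2 := by
    have : β * (4 * j) = b * δ := by
      rw [hβ]
      field_simp
    nlinarith
  refine (bernExp_bigSplit_le hG hb hδ hn hp.le hp1.le hj hmj s k).trans ?_
  rw [← hr]
  set N := (bigComps s k).card with hN
  have hNk : (N : ℝ) * k ≤ n := by
    have h2 : (((bigComps s k).card * k : ℕ) : ℝ) ≤ (Fintype.card V : ℝ) :=
      Nat.cast_le.2 (card_bigComps_mul_le s k)
    rwa [Nat.cast_mul] at h2
  have hkr : 2 ≤ r * β * k := by
    rw [div_le_iff₀ (by positivity)] at hk₀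
    have : (k₀ : ℝ) ≤ k := by exact_mod_cast (by omega : k₀ ≤ k)
    calc (2 : ℝ) ≤ k₀ * (r * β) := hk₀
      _ ≤ k * (r * β) := by gcongr
      _ = _ := by ring
  have hNn : (N : ℝ) ≤ r * β / 2 * n := by
    have h1 : r * β / 2 * (N * k) ≤ r * β / 2 * n := by gcongr
    have h2 : (N : ℝ) * 2 ≤ N * (r * β * k) := by gcongr
    linarith
  have h2N : (2 : ℝ) ^ N ≤ Real.exp N := by
    have h2 : (2 : ℝ) ≤ Real.exp 1 := by linarith [Real.add_one_le_exp (1 : ℝ)]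
    calc (2 : ℝ) ^ N ≤ Real.exp 1 ^ N := by gcongr
      _ = _ := by rw [← Real.exp_nat_mul, mul_one]
  have hrm : (1 - r) ^ m ≤ Real.exp (-r * m) := by
    have h2 : 1 - r ≤ Real.exp (-r) := by linarith [Real.add_one_le_exp (-r)]
    calc (1 - r) ^ m ≤ Real.exp (-r) ^ m := pow_le_pow_left₀ (by linarith) h2 m
      _ = _ := by rw [← Real.exp_nat_mul, mul_comm]
  calc (2 : ℝ) ^ N * (1 - r) ^ m ≤ Real.exp N * Real.exp (-r * m) :=
        mul_le_mul h2N hrm (pow_nonneg (by linarith) _) (Real.exp_pos _).le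
    _ = Real.exp (N + -r * m) := (Real.exp_add _ _).symm
    _ ≤ Real.exp (1 + -(r * β / 2) * n) := by
        refine Real.exp_le_exp.2 ?_
        have h3 : r * (β * n) ≤ r * (m + 1) := by gcongr
        nlinarith
    _ = Real.exp 1 * Real.exp (-(r * β / 2) * n) := Real.exp_add _ _
    _ ≤ _ := by
        gcongr
        linarith [Real.exp_one_lt_d9]

lemma exists_smaller_parameter {d : ℕ} (hd : 3 ≤ d) {p q a : ℝ} (hp : 0 < p) (hp1 : p < 1)
    (hq0 : 0 ≤ q) (hq1 : q < 1) (hq : q = (1 - p + p * q) ^ (d - 1)) (ha : 0 < a) :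
    ∃ p₁ : ℝ, 0 < p₁ ∧ p₁ < p ∧ ∀ᶠ k in Filter.atTop,
      (1 - (1 - p + p * dieProb p d k) ^ d) - (1 - (1 - p₁ + p₁ * dieProb p₁ d k) ^ d) ≤ a := by
  have hcont : ContinuousAt (fun z : ℝ × ℝ => (1 - z.1 + z.1 * z.2) ^ d) (p, q) := by fun_prop
  obtain ⟨r, hr0, hr⟩ := Metric.continuousAt_iff.1 hcont (a / 2) (by positivity)
  obtain ⟨x, hqx, hx⟩ := exists_between (lt_min hq1 (by linarith : q < q + r))
  have hx1 : x < 1 := hx.trans_le (min_le_left _ _)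
  have hxr : x < q + r := hx.trans_le (min_le_right _ _)
  have hlt := pow_lt_of_fixed_lt (by omega : 2 ≤ d - 1) hp hp1 hq0 hq hqx hx1
  have hev : ∀ᶠ y in nhds p, (1 - y + y * x) ^ (d - 1) < x := by
    have : ContinuousAt (fun y : ℝ => (1 - y + y * x) ^ (d - 1)) p := by fun_prop
    exact this.eventually_lt_const hlt
  have hIoo : Set.Ioo (max 0 (p - r)) p ∈ nhdsWithin p (Set.Iio p) :=
    Ioo_mem_nhdsLT (max_lt hp (by linarith))
  obtain ⟨p₁, hp₁x, hp₁⟩ := ((hev.filter_mono nhdsWithin_le_nhds).and hIoo).exists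
  have hp₁0 : 0 < p₁ := (le_max_left _ _).trans_lt hp₁.1
  have hp₁r : p - r < p₁ := (le_max_right _ _).trans_lt hp₁.1
  refine ⟨p₁, hp₁0, hp₁.2, ?_⟩
  have hlim : Filter.Tendsto (fun k => (1 - p + p * dieProb p d k) ^ d) Filter.atTop
      (nhds ((1 - p + p * q) ^ d)) :=
    (((tendsto_dieProb hd hp hp1 hq0 hq1 hq).const_mul p).const_add (1 - p)).pow d
  have hev2 := hlim.eventually_const_lt (show (1 - p + p * q) ^ d - a / 2 < _ by linarith)
  filter_upwards [hev2] with k hk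
  have hm := dieProb_mem hp₁0.le (hp₁.2.trans hp1).le (hq0.trans hqx.le) hp₁x.le k
  have h1 : (1 - p₁ + p₁ * dieProb p₁ d k) ^ d ≤ (1 - p₁ + p₁ * x) ^ d := by
    have h2 : 0 ≤ p₁ * dieProb p₁ d k := mul_nonneg hp₁0.le hm.1
    have h3 : p₁ < 1 := hp₁.2.trans hp1
    refine pow_le_pow_left₀ (by linarith) ?_ d
    nlinarith [hm.2]
  have h2 := hr (x := (p₁, x)) (by
    rw [Prod.dist_eq]
    refine max_lt ?_ ?_
    · rw [Real.dist_eq, abs_lt]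
      constructor <;> linarith [hp₁.2]
    · rw [Real.dist_eq, abs_lt]
      constructor <;> linarith)
  rw [Real.dist_eq] at h2
  have h3 := (abs_lt.1 h2).2
  simp only at h3
  linarith

lemma eventually_abs_localExcess_density_sub_le {d : ℕ} (hd : 3 ≤ d) {p q a : ℝ} (hp : 0 < p)
    (hp1 : p < 1) (hq0 : 0 ≤ q) (hq1 : q < 1) (hq : q = (1 - p + p * q) ^ (d - 1)) (ha : 0 < a) :
    ∀ᶠ k in Filter.atTop,
      |(1 / 2 * d * (p - p * dieProb p d k * (1 - p + p * dieProb p d k) ^ (d - 1))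
        - (1 - (1 - p + p * dieProb p d k) ^ d)) -
        ((1 / 2 * p * d * (1 - q ^ 2)) - (1 - q * (1 - p) - p * q ^ 2))| ≤ a := by
  have hcont : Continuous fun y : ℝ => 1 / 2 * (d : ℝ) * (p - p * y * (1 - p + p * y) ^ (d - 1))
        - (1 - (1 - p + p * y) ^ d) := by fun_prop
  have hlim := (hcont.tendsto q).comp (tendsto_dieProb hd hp hp1 hq0 hq1 hq)
  have hval : 1 / 2 * (d : ℝ) * (p - p * q * (1 - p + p * q) ^ (d - 1)) - (1 - (1 - p + p * q) ^ d)
      = (1 / 2 * p * d * (1 - q ^ 2)) - (1 - q * (1 - p) - p * q ^ 2) := by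
    have h1 : (1 - p + p * q) ^ d = q * (1 - p + p * q) := by
      conv_lhs => rw [← Nat.sub_add_cancel (by omega : 1 ≤ d), pow_succ, ← hq]
    rw [h1, ← hq]
    ring
  rw [hval] at hlim
  filter_upwards [Metric.tendsto_nhds.1 hlim a ha] with k hk
  rw [Real.dist_eq] at hk
  exact hk.le

lemma one_sub_le_percProb {G : SimpleGraph V} {p p₁ p₂ : ℝ} (h0 : 0 ≤ p₁) (h1 : p₁ ≤ 1)
    (h0' : 0 ≤ p₂) (h1' : p₂ ≤ 1) (h : 1 - p = (1 - p₁) * (1 - p₂)) {P : SimpleGraph V → Prop}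
    {g D : Finset (Sym2 V) → ℝ} {B : Finset (Sym2 V) → Finset (Sym2 V) → ℝ}
    (hP : ∀ s ⊆ edgeFinset' G, ∀ t ⊆ edgeFinset' G,
      1 - (g (s ∪ t) + D s + B s t) ≤
        if P (SimpleGraph.fromEdgeSet ((s ∪ t : Finset (Sym2 V)) : Set (Sym2 V))) then 1 else 0)
    {x : ℝ} (hB : ∀ s, bernExp p₂ (edgeFinset' G) (B s) ≤ x) :
    1 - (bernExp p (edgeFinset' G) g + bernExp p₁ (edgeFinset' G) D + x) ≤ percProb G p P := by
  have h2 : percProb G p P = bernExp p (edgeFinset' G)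
      (fun s => if P (SimpleGraph.fromEdgeSet (s : Set (Sym2 V))) then 1 else 0) := rfl
  rw [h2, bernExp_union_thinning h (edgeFinset' G) g, bernExp_union_thinning h (edgeFinset' G)
    (fun s => if P (SimpleGraph.fromEdgeSet (s : Set (Sym2 V))) then 1 else 0)]
  have h3 : ∀ s ⊆ edgeFinset' G, 1 - (bernExp p₂ (edgeFinset' G) (fun t => g (s ∪ t)) + D s + x) ≤
      bernExp p₂ (edgeFinset' G) (fun t =>
        if P (SimpleGraph.fromEdgeSet ((s ∪ t : Finset (Sym2 V)) : Set (Sym2 V))) then 1 else 0) := by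
    intro s hs
    refine le_trans ?_ (bernExp_mono h0' h1' fun t ht => hP s hs t ht)
    rw [bernExp_sub, bernExp_const, bernExp_add, bernExp_add, bernExp_const]
    linarith [hB s]
  refine le_trans ?_ (bernExp_mono h0 h1 h3)
  rw [bernExp_sub, bernExp_const, bernExp_add, bernExp_add, bernExp_const]

lemma one_sub_indicators_le {a b c d e P : Prop} [Decidable a] [Decidable b] [Decidable c]
    [Decidable d] [Decidable e] {_ : Decidable P} (h : ¬a → ¬b → ¬c → ¬d → ¬e → P) :
    (1 : ℝ) - ((((if a then 1 else 0) + (if b then 1 else 0)) + (if c then 1 else 0)) +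
      (if d then 1 else 0) + (if e then 1 else 0)) ≤ if P then 1 else 0 := by
  by_cases hP : P
  · rw [if_pos hP]
    split_ifs <;> norm_num
  · rw [if_neg hP]
    split_ifs <;> first | exact absurd (h ‹_› ‹_› ‹_› ‹_› ‹_›) hP | norm_num

end Assembly

theorem excess_of_giant_and_two_core (d : ℕ) (hd : 3 ≤ d) (p q : ℝ)
    (hp : 1 / ((d : ℝ) - 1) < p) (hp1 : p < 1)
    (hq0 : 0 ≤ q) (hq1 : q < 1)
    (hq : q = (1 - p + p * q) ^ (d - 1))
    (ε b : ℝ) (hε : 0 < ε) (hb : 0 < b) :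
    ∃ c > (0:ℝ), ∃ C > (0:ℝ), ∃ R : ℕ, 0 < R ∧
      ∀ (V : Type) [Fintype V] [DecidableEq V] (G : SimpleGraph V),
        IsRegularExpander G b d → (R : ℕ∞) ≤ G.girth →
        1 - C * Real.exp (-c * Fintype.card V) ≤
          percProb G p (fun H =>
            ∀ c₁ : H.ConnectedComponent, IsLargestComp H c₁ →
              |(((compEdges H c₁).card : ℝ) - (compVerts H c₁).card + 1)
                  - ((1 / 2 * p * d * (1 - q ^ 2)) - (1 - q * (1 - p) - p * q ^ 2))
                    * Fintype.card V| ≤ 2 * ε * Fintype.card V ∧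
              |(((twoCoreComp H c₁).edgeSet.ncard : ℝ)
                    - (twoCoreComp H c₁).support.ncard + 1)
                  - ((1 / 2 * p * d * (1 - q) ^ 2)
                    - (1 - q - ((d : ℝ) - 1) * p * q * (1 - q))) * Fintype.card V|
                ≤ 2 * ε * Fintype.card V) := by
  have hd3 : (3 : ℝ) ≤ d := by exact_mod_cast hd
  have hp0 : 0 < p := lt_trans (by
    have : (0 : ℝ) < (d : ℝ) - 1 := by linarith
    positivity) hp
  have hd1 : 1 ≤ d := by omega
  set a := ε / (15 * d) with ha
  have ha0 : 0 < a := by positivity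
  have had : 15 * (d * a) = ε := by
    rw [ha]
    field_simp
  obtain ⟨p₁, hp₁0, hp₁p, hev₁⟩ := exists_smaller_parameter hd hp0 hp1 hq0 hq1 hq ha0
  have hev₂ := eventually_abs_localExcess_density_sub_le hd hp0 hp1 hq0 hq1 hq ha0
  have hp₁1 : p₁ < 1 := hp₁p.trans hp1
  have hp₁' : 0 < 1 - p₁ := by linarith
  set p₂ := 1 - (1 - p) / (1 - p₁) with hp₂
  have hp₂1 : p₂ < 1 := by
    have : 0 < (1 - p) / (1 - p₁) := div_pos (by linarith) hp₁'
    linarith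
  have hp₂0 : 0 < p₂ := by
    have : (1 - p) / (1 - p₁) < 1 := (div_lt_one hp₁').2 (by linarith)
    linarith
  have hpp : 1 - p = (1 - p₁) * (1 - p₂) := by
    rw [hp₂, sub_sub_cancel, mul_div_cancel₀ _ hp₁'.ne']
  obtain ⟨cb, hcb, k₀, hsplit⟩ := exists_bigSplit_const (d := d) hb ha0 hp₂0 hp₂1
  obtain ⟨k, ⟨hk₁, hk₂⟩, hk₀⟩ := ((hev₁.and hev₂).and (Filter.eventually_ge_atTop k₀)).exists
  obtain ⟨ct, hct, htail⟩ := exists_tail_const hd1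
    (K := 2 * d * (d + 1) ^ (k + 1)) (a := a) (by positivity) ha0
  set M : ℝ := ((d : ℝ) + 1) ^ k with hM
  obtain ⟨n₀, hn₀⟩ := exists_nat_ge ((2 * d * M + 2) / ε)
  set c := min cb ct with hc
  have hc0 : 0 < c := lt_min hcb hct
  refine ⟨c, hc0, 7 + Real.exp (c * (n₀ + 1)), by positivity, 2 * k + 3, by omega, ?_⟩
  intro V _ _ G hG hgirth
  set n : ℝ := (Fintype.card V : ℝ) with hn
  have hn0 : 0 ≤ n := Nat.cast_nonneg _
  have hdeg : ∀ v, (nbrs G v).card = d := fun v => by rw [card_nbrs, hG.2 v]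
  have hdeg' : ∀ v, (nbrs G v).card ≤ d := fun v => (hdeg v).le
  have hg : ∀ (x : V) (w : G.Walk x x), w.IsCycle → 2 * k + 3 ≤ w.length := fun x w hw =>
    le_trans (by exact_mod_cast hgirth) (SimpleGraph.girth_le_length hw)
  rcases Nat.lt_or_ge (Fintype.card V) (n₀ + 1) with hsmall | hlarge
  · refine le_trans ?_ (bernExp_nonneg hp0.le hp1.le fun s _ => by split_ifs <;> norm_num)
    have h1 : n ≤ n₀ + 1 := by
      rw [hn]
      exact_mod_cast hsmall.le
    have h2 : 1 ≤ Real.exp (c * (n₀ + 1)) * Real.exp (-c * n) := by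
      rw [← Real.exp_add]
      refine Real.one_le_exp ?_
      nlinarith
    nlinarith [Real.exp_pos (-c * n)]
  have hVpos : 0 < Fintype.card V := by omega
  have hnpos : 0 < n := Nat.cast_pos.2 hVpos
  have hn₁ : 2 * d * M + 2 ≤ ε * n := by
    have h1 : (n₀ : ℝ) ≤ n := Nat.cast_le.2 (by omega)
    have h2 := hn₀.trans h1
    rw [div_le_iff₀ hε] at h2
    linarith
  have hE : ((edgeFinset' G).card : ℝ) ≤ n * d := by
    rw [hn]
    exact_mod_cast card_edgeFinset'_le hdeg'
  have hL := htail _ (edgeFinset' G) (localExcess G k) p n hp0.le hp1.le hn0 hE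
    (abs_localExcess_insert_sub_le hd1 hdeg')
  have hR := htail _ (edgeFinset' G) (reachCount G k) p n hp0.le hp1.le hn0 hE
    (abs_reachCount_insert_sub_le hd1 hdeg')
  have hR₁ := htail _ (edgeFinset' G) (reachCount G k) p₁ n hp₁0.le hp₁1.le hn0 hE
    (abs_reachCount_insert_sub_le hd1 hdeg')
  have hEL := bernExp_localExcess hdeg hg p (k := k) (by omega)
  have hER := bernExp_reachCount hdeg hg p (k := k) (by omega)
  have hER₁ := bernExp_reachCount hdeg hg p₁ (k := k) (by omega)
  set eL := bernExp p (edgeFinset' G) (localExcess G k)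
  set eR := bernExp p (edgeFinset' G) (reachCount G k)
  set eR₁ := bernExp p₁ (edgeFinset' G) (reachCount G k)
  set τ := (1 / 2 * p * d * (1 - q ^ 2)) - (1 - q * (1 - p) - p * q ^ 2) with hτ
  have hτ₂ : (1 / 2 * p * d * (1 - q) ^ 2) - (1 - q - ((d : ℝ) - 1) * p * q * (1 - q)) = τ := by
    rw [hτ]
    ring
  have hmean : |eL - τ * n| ≤ a * n := by
    rw [hEL, ← sub_mul, abs_mul, abs_of_nonneg hn0]
    gcongr
  have hmeanR : eR - eR₁ ≤ a * n := by
    rw [hER, hER₁, ← sub_mul]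
    gcongr
  refine le_trans ?_ (one_sub_le_percProb hp₁0.le hp₁1.le hp₂0.le hp₂1.le hpp
    (g := fun s => ((if a * n ≤ localExcess G k s - eL then 1 else 0) +
      (if a * n ≤ eL - localExcess G k s then 1 else 0)) +
      (if a * n ≤ reachCount G k s - eR then 1 else 0))
    (D := fun s => if a * n ≤ eR₁ - reachCount G k s then 1 else 0)
    (B := fun s t => if BigSplit s (k + 2) (a * n) t then 1 else 0) (fun s hs t ht => ?_)
    (fun s => hsplit (k + 2) (by omega) V G s hG.1 hVpos))
  · rw [bernExp_add, bernExp_add]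
    have h1 : Real.exp (-ct * n) ≤ Real.exp (-c * n) :=
      Real.exp_le_exp.2 (mul_le_mul_of_nonneg_right (neg_le_neg (min_le_right cb ct)) hn0)
    have h2 : Real.exp (-cb * n) ≤ Real.exp (-c * n) :=
      Real.exp_le_exp.2 (mul_le_mul_of_nonneg_right (neg_le_neg (min_le_left cb ct)) hn0)
    have h3 : 0 < Real.exp (c * (n₀ + 1)) * Real.exp (-c * n) := by positivity
    linarith [hL.1, hL.2, hR.1, hR₁.2]
  · refine one_sub_indicators_le fun h1 h2 h3 h4 h5 => ?_
    intro γ hγ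
    have h6 := abs_le.1 (abs_excess_sub_localExcess_le hd1 hdeg' hg (by omega : k + 1 < 2 * k + 3)
      hs ht (mul_pos ha0 hnpos) (e := 3 * (a * n)) (by linarith) h5 rfl hγ)
    have h7 := abs_le.1 (abs_twoCoreComp_excess_sub_le
      (H := SimpleGraph.fromEdgeSet ((s ∪ t : Finset (Sym2 V)) : Set (Sym2 V))) (c := γ))
    have h8 := abs_le.1 hmean
    have h9 : (d : ℝ) * (4 * (a * n) + 3 * (3 * (a * n)) + 2 * ((d : ℝ) + 1) ^ k) =
        13 * (d * a) * n + 2 * d * M := by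
      rw [hM]
      ring
    have h10 : a * n ≤ d * a * n := by
      have : a * n * 1 ≤ a * n * d := by gcongr; linarith
      linarith
    have h11 : 15 * (d * a) * n = ε * n := by rw [had]
    rw [h9] at h6
    rw [hτ₂, abs_le, abs_le]
    refine ⟨⟨?_, ?_⟩, ?_, ?_⟩ <;> linarith [h6.1, h6.2, h7.1, h7.2, h8.1, h8.2]

end Percolation

end
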